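/- arXiv:2501.11215 — 5 statements merged into one kernel-verified Lean document; each statement's English description precedes it below -/
import Mathlib

section
/- Let H = (F, θ₀, θ₁, θ₂) be a connected combinatorial hypermap and let A ⊆ E(H), with A^c = E(H) ∖ A. Then the Euler characteristic of the partial dual satisfies χ(H^A) = χ(A) + χ(A^c) − 2·v(H). -/
open Classical

/-- A pre-hypermap on a set of flags `F`: three structure maps `θ₀, θ₁, θ₂`.
It is a genuine combinatorial hypermap when the three maps are
fixed-point-free involutions (see `PreHypermap.IsHypermap`). -/
structure PreHypermap (F : Type*) where
  theta : Fin 3 → F → F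

namespace PreHypermap

variable {F : Type*}

/-- `H` is a combinatorial hypermap: `θ₀, θ₁, θ₂` are fixed-point-free involutions. -/
def IsHypermap (H : PreHypermap F) : Prop :=
  ∀ i : Fin 3, Function.Involutive (H.theta i) ∧ ∀ x : F, H.theta i x ≠ x

/-- The equivalence relation on `F` generated by a set of functions `F → F`;
for a set of involutions, two flags are related iff they are in the same orbit
of the subgroup generated by those involutions. -/
def orbitRel (fs : Set (F → F)) : F → F → Prop :=
  Relation.EqvGen (fun x y => ∃ f ∈ fs, f x = y)

/-- The setoid of orbits of the subgroup generated by a set of involutions. -/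
def orbitSetoid (fs : Set (F → F)) : Setoid F :=
  Relation.EqvGen.setoid (fun x y => ∃ f ∈ fs, f x = y)

/-- The number of orbits on `F` of the subgroup generated by a set of involutions. -/
noncomputable def orbitCount (fs : Set (F → F)) : ℕ :=
  Nat.card (Quotient (orbitSetoid fs))

/-- `v H`: the number of vertices, i.e. orbits of `⟨θ₁, θ₂⟩`. -/
noncomputable def v (H : PreHypermap F) : ℕ := orbitCount {H.theta 1, H.theta 2}

/-- `e H`: the number of hyperedges, i.e. orbits of `⟨θ₀, θ₂⟩`. -/
noncomputable def e (H : PreHypermap F) : ℕ := orbitCount {H.theta 0, H.theta 2}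

/-- `f H`: the number of faces, i.e. orbits of `⟨θ₀, θ₁⟩`. -/
noncomputable def f (H : PreHypermap F) : ℕ := orbitCount {H.theta 0, H.theta 1}

/-- `c H`: the number of components, i.e. orbits of `⟨θ₀, θ₁, θ₂⟩`. -/
noncomputable def c (H : PreHypermap F) : ℕ :=
  orbitCount {H.theta 0, H.theta 1, H.theta 2}

/-- `H` is connected if it has exactly one component. -/
def Connected (H : PreHypermap F) : Prop := H.c = 1

/-- The Euler characteristic `χ(H) = v + e + f - |F|/2`. -/
noncomputable def chi (H : PreHypermap F) : ℤ :=
  (H.v : ℤ) + (H.e : ℤ) + (H.f : ℤ) - (Nat.card F : ℤ) / 2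

/-- The Euler genus `ε(H) = 2 c(H) - χ(H)`. -/
noncomputable def eulerGenus (H : PreHypermap F) : ℤ := 2 * (H.c : ℤ) - H.chi

/-- `H` is orientable: there is `o : F → {+1, -1}` with `o (θᵢ x) = - o x` for all `i, x`. -/
def Orientable (H : PreHypermap F) : Prop :=
  ∃ o : F → ℤ, (∀ x : F, o x = 1 ∨ o x = -1) ∧
    ∀ (i : Fin 3) (x : F), o (H.theta i x) = - o x

/-- The set `E(H)` of hyperedges of `H`, each hyperedge being its set of flags
(an orbit of `⟨θ₀, θ₂⟩`). -/
def edges (H : PreHypermap F) : Set (Set F) :=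
  {s : Set F | ∃ x : F, s = {y : F | orbitRel {H.theta 0, H.theta 2} x y}}

/-- The geometric dual `H* = (F, θ₂, θ₁, θ₀)`. -/
def dual (H : PreHypermap F) : PreHypermap F where
  theta := fun i => H.theta (2 - i)

/-- The partial dual of `H` with respect to a set `S` of flags (interchange `θ₀` and
`θ₂` on `S`); for `A ⊆ E(H)` the partial dual `H^A` is `H.pdual (⋃₀ A)`. -/
noncomputable def pdual (H : PreHypermap F) (S : Set F) : PreHypermap F where
  theta := fun i x =>
    if i = 1 then H.theta 1 x
    else if x ∈ S then H.theta (2 - i) x else H.theta i x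

/-- `f(A)` for `A ⊆ E(H)`: the number of orbits of `⟨θ₁, θ₂^A⟩` (which equals `v(H^A)`). -/
noncomputable def subf (H : PreHypermap F) (A : Set (Set F)) : ℕ :=
  (H.pdual (⋃₀ A)).v

/-- `c(A)` for `A ⊆ E(H)`: the number of orbits of the subgroup generated by `θ₁`, `θ₂`
and the permutation equal to `θ₀` on `S(A)` and the identity elsewhere. -/
noncomputable def subc (H : PreHypermap F) (A : Set (Set F)) : ℕ :=
  orbitCount {H.theta 1, H.theta 2, fun x => if x ∈ ⋃₀ A then H.theta 0 x else x}

/-- `χ(A) = v(A) + e(A) + f(A) - |S(A)|/2` for `A ⊆ E(H)`, where `v(A) = v(H)`,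
`e(A) = |A|`, `f(A) = v(H^A)` and `S(A) = ⋃₀ A`. -/
noncomputable def subchi (H : PreHypermap F) (A : Set (Set F)) : ℤ :=
  (H.v : ℤ) + (A.ncard : ℤ) + (H.subf A : ℤ) - ((⋃₀ A).ncard : ℤ) / 2

/-- `ε(A) = 2 c(A) - χ(A)` for `A ⊆ E(H)`. -/
noncomputable def subeps (H : PreHypermap F) (A : Set (Set F)) : ℤ :=
  2 * (H.subc A : ℤ) - H.subchi A

/-- The hyperedge set of `H` as a finset. -/
noncomputable def edgeFinset (H : PreHypermap F) [Fintype F] : Finset (Set F) :=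
  (Set.toFinite H.edges).toFinset

/-- The partial-dual Euler-genus polynomial `∂ε_H(z) = Σ_{A ⊆ E(H)} z^(ε(H^A))`. -/
noncomputable def pdPoly (H : PreHypermap F) [Fintype F] : Polynomial ℕ :=
  ∑ A ∈ H.edgeFinset.powerset,
    Polynomial.X ^ ((H.pdual (⋃₀ (A : Set (Set F)))).eulerGenus).toNat

/-- The partial-dual orientable-genus polynomial `∂Γ_H(z) = Σ_{A ⊆ E(H)} z^(ε(H^A)/2)`. -/
noncomputable def pdGammaPoly (H : PreHypermap F) [Fintype F] : Polynomial ℕ :=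
  ∑ A ∈ H.edgeFinset.powerset,
    Polynomial.X ^ (((H.pdual (⋃₀ (A : Set (Set F)))).eulerGenus) / 2).toNat

/-- The join `H₁ ∨ H₂` of two hypermaps on disjoint flag sets, joining the corner
`{x, θ₁ x}` of `H₁` to the corner `{y, θ₁′ y}` of `H₂`. -/
noncomputable def join {F₁ F₂ : Type*} (H₁ : PreHypermap F₁) (H₂ : PreHypermap F₂)
    (x : F₁) (y : F₂) : PreHypermap (F₁ ⊕ F₂) where
  theta := fun i z =>
    if i = 1 then
      if z = Sum.inl x then Sum.inr y
      else if z = Sum.inr y then Sum.inl x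
      else if z = Sum.inl (H₁.theta 1 x) then Sum.inr (H₂.theta 1 y)
      else if z = Sum.inr (H₂.theta 1 y) then Sum.inl (H₁.theta 1 x)
      else Sum.map (H₁.theta 1) (H₂.theta 1) z
    else Sum.map (H₁.theta i) (H₂.theta i) z

/-- The bar-amalgamation `H₁ ⊕ H₂` of two hypermaps on disjoint flag sets, with a new
connecting hyperedge `{p, q, p', q'} = Fin 4` meeting the corner `{x, θ₁ x}` of `H₁`
and the corner `{y, θ₁′ y}` of `H₂`. -/
noncomputable def bar {F₁ F₂ : Type*} (H₁ : PreHypermap F₁) (H₂ : PreHypermap F₂)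
    (x : F₁) (y : F₂) : PreHypermap ((F₁ ⊕ F₂) ⊕ Fin 4) where
  theta := fun i z =>
    if i = 0 then
      match z with
      | .inl (.inl a) => .inl (.inl (H₁.theta 0 a))
      | .inl (.inr b) => .inl (.inr (H₂.theta 0 b))
      | .inr k => .inr (Equiv.swap (0 : Fin 4) 2 (Equiv.swap (1 : Fin 4) 3 k))
    else if i = 2 then
      match z with
      | .inl (.inl a) => .inl (.inl (H₁.theta 2 a))
      | .inl (.inr b) => .inl (.inr (H₂.theta 2 b))
      | .inr k => .inr (Equiv.swap (0 : Fin 4) 1 (Equiv.swap (2 : Fin 4) 3 k))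
    else
      if z = .inl (.inl x) then .inr 0
      else if z = .inr 0 then .inl (.inl x)
      else if z = .inl (.inl (H₁.theta 1 x)) then .inr 1
      else if z = .inr 1 then .inl (.inl (H₁.theta 1 x))
      else if z = .inl (.inr y) then .inr 2
      else if z = .inr 2 then .inl (.inr y)
      else if z = .inl (.inr (H₂.theta 1 y)) then .inr 3
      else if z = .inr 3 then .inl (.inr (H₂.theta 1 y))
      else
        match z with
        | .inl (.inl a) => .inl (.inl (H₁.theta 1 a))
        | .inl (.inr b) => .inl (.inr (H₂.theta 1 b))
        | .inr k => .inr k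

end PreHypermap

/-!
Partial duality with respect to `A` interchanges `θ₀` and `θ₂` on whole hyperedges, so it changes
neither the flag sets of the hyperedges nor their number. Moreover `θ₀^A = θ₂^(A^c)`, so the faces
of `H^A` are the vertices of `H^(A^c)`; that is, `f(H^A) = f(A^c)`, while `v(H^A) = f(A)` by
definition. The hyperedges split into `A` and `A^c`, and the flags into `S(A)` and `S(A^c)`.
Halving the flag counts is exact because `θ₀` pairs off the flags of `S(A)`.
-/

theorem even_card_of_involution {α : Type*} {s : Finset α} {φ : α → α}
    (hmaps : ∀ x ∈ s, φ x ∈ s) (hinv : ∀ x ∈ s, φ (φ x) = x) (hne : ∀ x ∈ s, φ x ≠ x) :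
    Even s.card := by
  have hsum : ∑ _x ∈ s, (1 : ZMod 2) = 0 :=
    Finset.sum_involution (fun x _ => φ x) (fun _ _ => by decide) (fun x hx _ => hne x hx)
      hmaps hinv
  simpa [ZMod.natCast_eq_zero_iff_even] using hsum

theorem sUnion_classes_sdiff {α : Type*} (r : Setoid α) {A : Set (Set α)} (hA : A ⊆ r.classes) :
    ⋃₀ (r.classes \ A) = (⋃₀ A)ᶜ := by
  have hdisj : (r.classes ∪ A).PairwiseDisjoint id := by
    rw [Set.union_eq_self_of_subset_right hA]
    exact r.isPartition_classes.pairwiseDisjoint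
  have hdiff : ⋃₀ r.classes \ ⋃₀ A = ⋃₀ (r.classes \ A) := by
    simpa only [Set.sUnion_eq_biUnion, id] using Set.biUnion_sdiff_biUnion_eq hdisj
  rw [← hdiff, r.sUnion_classes, Set.compl_eq_univ_sdiff]

namespace PreHypermap

variable {F : Type*} (H : PreHypermap F) (S : Set F)

theorem orbitSetoid_piecewise_pair (φ ψ : F → F) :
    orbitSetoid {S.piecewise φ ψ, S.piecewise ψ φ} = orbitSetoid {φ, ψ} := by
  unfold orbitSetoid
  congr 1
  ext x y
  by_cases hx : x ∈ S <;> simp [hx, or_comm]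

theorem edges_eq_classes : H.edges = (orbitSetoid {H.theta 0, H.theta 2}).classes := by
  let r : Setoid F := orbitSetoid {H.theta 0, H.theta 2}
  have orbit_eq_class (x : F) : {y | r x y} = {y | r y x} := Set.ext fun _ => r.comm'
  exact Set.ext fun _ => exists_congr fun x => by rw [← orbit_eq_class x]; rfl

theorem ncard_edges : H.edges.ncard = H.e := by
  rw [edges_eq_classes]
  exact (Nat.card_congr (Setoid.quotientEquivClasses _)).symm

theorem pdual_theta_zero : (H.pdual S).theta 0 = S.piecewise (H.theta 2) (H.theta 0) := rfl

theorem pdual_theta_one : (H.pdual S).theta 1 = H.theta 1 := rfl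

theorem pdual_theta_two : (H.pdual S).theta 2 = S.piecewise (H.theta 0) (H.theta 2) := rfl

theorem e_pdual : (H.pdual S).e = H.e := by
  unfold e orbitCount
  rw [pdual_theta_zero, pdual_theta_two, orbitSetoid_piecewise_pair, Set.pair_comm]

theorem f_pdual : (H.pdual S).f = (H.pdual Sᶜ).v := by
  unfold f v
  rw [pdual_theta_zero, pdual_theta_one, pdual_theta_one, pdual_theta_two, Set.piecewise_compl,
    Set.pair_comm]

variable {H} {A : Set (Set F)}

theorem sUnion_edges_sdiff (hA : A ⊆ H.edges) : ⋃₀ (H.edges \ A) = (⋃₀ A)ᶜ := by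
  rw [edges_eq_classes] at hA ⊢
  exact sUnion_classes_sdiff _ hA

theorem theta_zero_mem_sUnion (hA : A ⊆ H.edges) {x : F} (hx : x ∈ ⋃₀ A) :
    H.theta 0 x ∈ ⋃₀ A := by
  obtain ⟨s, hs, hxs⟩ := hx
  obtain ⟨z, rfl⟩ := hA hs
  exact ⟨_, hs, .trans _ _ _ hxs (.rel _ _ ⟨H.theta 0, .inl rfl, rfl⟩)⟩

theorem even_ncard_sUnion [Finite F] (hinv : Function.Involutive (H.theta 0))
    (hne : ∀ x, H.theta 0 x ≠ x) (hA : A ⊆ H.edges) : Even (⋃₀ A).ncard := by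
  rw [Set.ncard_eq_toFinset_card (⋃₀ A)]
  refine even_card_of_involution (φ := H.theta 0) (fun x hx => ?_) (fun x _ => hinv x)
    (fun x _ => hne x)
  rw [Set.Finite.mem_toFinset] at hx ⊢
  exact theta_zero_mem_sUnion hA hx

end PreHypermap

open PreHypermap in
theorem statement_0_general {F : Type*} [Finite F] (H : PreHypermap F) (hH : H.IsHypermap)
    (A : Set (Set F)) (hA : A ⊆ H.edges) :
    (H.pdual (⋃₀ A)).chi = H.subchi A + H.subchi (H.edges \ A) - 2 * (H.v : ℤ) := by
  have hedges : (H.edges \ A).ncard + A.ncard = H.e :=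
    H.ncard_edges ▸ Set.ncard_sdiff_add_ncard_of_subset hA
  have hflags : (⋃₀ A).ncard + ((⋃₀ A)ᶜ).ncard = Nat.card F := Set.ncard_add_ncard_compl _
  obtain ⟨k, hk⟩ : Even (⋃₀ A).ncard := even_ncard_sUnion (hH 0).1 (hH 0).2 hA
  unfold chi subchi subf
  rw [e_pdual, f_pdual, sUnion_edges_sdiff hA]
  omega

open PreHypermap in
/-- Euler-characteristic formula for the partial dual:
`χ(H^A) = χ(A) + χ(A^c) - 2 v(H)`. -/
theorem statement_0 {F : Type} [Fintype F] (H : PreHypermap F)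
    (hH : H.IsHypermap) (hconn : H.Connected)
    (A : Set (Set F)) (hA : A ⊆ H.edges) :
    (H.pdual (⋃₀ A)).chi = H.subchi A + H.subchi (H.edges \ A) - 2 * (H.v : ℤ) :=
  statement_0_general H hH A hA
end

section
/- Let H = (F, θ₀, θ₁, θ₂) be a connected orientable combinatorial hypermap. Then for every A ⊆ E(H) the partial-dual Euler genus ε(H^A) is even; consequently the partial-dual Euler-genus polynomial ∂ε_H(z) is a polynomial in z², i.e. ∂ε_H(z) = ∂Γ_H(z²) where ∂Γ_H(z) = Σ_{A ⊆ E(H)} z^{ε(H^A)/2}. -/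
open Classical

/-!
Let `U` be the set of positively oriented flags of an orientable hypermap. Each `θᵢ` exchanges `U`
with its complement, so every `θᵢ θⱼ` restricts to a permutation of `U`, and the orbits of
`⟨θᵢ, θⱼ⟩` correspond to the cycles of that restriction. The sign of a permutation of `U` is
`(-1) ^ (number of cycles + |U|)`, hence `(θ₀ θ₁)(θ₁ θ₂) = θ₀ θ₂` forces `v + e + f + 3 |U|` to be
even. As `|U| = |F| / 2`, this says that the Euler genus is even. Partial duality only interchanges
the values of `θ₀` and `θ₂` at some flags, so an orientation of `H` also orients every partial dual.
-/

section PermCycles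

variable {α : Type*} [Fintype α] [DecidableEq α]

/-- Sends a point to the cycle of `σ` through it. Since `cycleFactorsFinset` omits the trivial
cycles, a fixed point is sent to itself in the second summand. -/
def cycleOrFixedPoint (σ : Equiv.Perm α) (x : α) :
    σ.cycleFactorsFinset ⊕ Function.fixedPoints σ :=
  if hx : σ x = x then .inr ⟨x, hx⟩
  else .inl ⟨σ.cycleOf x, by
    rwa [Equiv.Perm.cycleOf_mem_cycleFactorsFinset_iff, Equiv.Perm.mem_support]⟩

theorem cycleOrFixedPoint_eq_iff {σ : Equiv.Perm α} {x y : α} :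
    cycleOrFixedPoint σ x = cycleOrFixedPoint σ y ↔ σ.SameCycle x y := by
  by_cases hx : σ x = x <;> by_cases hy : σ y = y
  · simp only [cycleOrFixedPoint, hx, hy, dif_pos, Sum.inr.injEq]
    exact ⟨fun h => (congrArg Subtype.val h).sameCycle σ, fun h => Subtype.ext (h.eq_of_left hx)⟩
  · simp only [cycleOrFixedPoint, hx, hy, dif_pos, dif_neg, not_false_eq_true, reduceCtorEq,
      false_iff]
    exact fun h => hy (h.apply_eq_self_iff.1 hx)
  · simp only [cycleOrFixedPoint, hx, hy, dif_pos, dif_neg, not_false_eq_true, reduceCtorEq,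
      false_iff]
    exact fun h => hx (h.apply_eq_self_iff.2 hy)
  · simp only [cycleOrFixedPoint, hx, hy, dif_neg, not_false_eq_true, Sum.inl.injEq,
      Subtype.mk.injEq]
    exact (Equiv.Perm.sameCycle_iff_cycleOf_eq_of_mem_support
      (Equiv.Perm.mem_support.2 hx) (Equiv.Perm.mem_support.2 hy)).symm

theorem cycleOrFixedPoint_surjective (σ : Equiv.Perm α) :
    Function.Surjective (cycleOrFixedPoint σ) := by
  rintro (⟨c, hc⟩ | ⟨x, hx⟩)
  · obtain ⟨x, hxc⟩ := (Equiv.Perm.mem_cycleFactorsFinset_iff.1 hc).1.nonempty_support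
    have hx : σ x ≠ x :=
      Equiv.Perm.mem_support.1 (Equiv.Perm.mem_cycleFactorsFinset_support_le hc hxc)
    exact ⟨x, by simp [cycleOrFixedPoint, hx, Equiv.Perm.cycle_is_cycleOf hxc hc]⟩
  · exact ⟨x, dif_pos hx⟩

theorem card_quotient_sameCycle (σ : Equiv.Perm α) :
    Nat.card (Quotient (Equiv.Perm.SameCycle.setoid σ)) =
      σ.cycleType.card + Fintype.card (Function.fixedPoints σ) := by
  have setoid_eq_ker : Equiv.Perm.SameCycle.setoid σ = Setoid.ker (cycleOrFixedPoint σ) :=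
    Setoid.ext fun _ _ => cycleOrFixedPoint_eq_iff.symm
  rw [setoid_eq_ker, Nat.card_congr
    (Setoid.quotientKerEquivOfSurjective _ (cycleOrFixedPoint_surjective σ))]
  simp [Equiv.Perm.cycleType_def]

theorem sign_eq_neg_one_pow_card_quotient_sameCycle (σ : Equiv.Perm α) :
    Equiv.Perm.sign σ =
      (-1) ^ (Nat.card (Quotient (Equiv.Perm.SameCycle.setoid σ)) + Fintype.card α) := by
  have card_split : Fintype.card α = Fintype.card (Function.fixedPoints σ) + σ.cycleType.sum := by
    have := σ.sum_cycleType_le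
    have := σ.card_fixedPoints
    omega
  rw [card_quotient_sameCycle, Equiv.Perm.sign_of_cycleType, neg_one_pow_congr]
  grind

end PermCycles

namespace PreHypermap

section Flips

variable {F : Type*}

/-- `a` is an involution exchanging `U` with its complement. For `U` the set of positively oriented
flags of an oriented hypermap, the `θᵢ` are of this kind. -/
structure IsFlip (U : Set F) (a : F → F) : Prop where
  involutive : Function.Involutive a
  apply_mem_iff : ∀ x, a x ∈ U ↔ x ∉ U

variable {U : Set F} {a b c : F → F}

/-- The permutation of `U` induced by the composite `a ∘ b` of two flips. -/
def IsFlip.rotation (ha : IsFlip U a) (hb : IsFlip U b) : Equiv.Perm U :=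
  (ha.involutive.toPerm * hb.involutive.toPerm).subtypePerm fun x => by
    simp [ha.apply_mem_iff, hb.apply_mem_iff]

theorem IsFlip.rotation_mul_rotation (ha : IsFlip U a) (hb : IsFlip U b) (hc : IsFlip U c) :
    ha.rotation hb * hb.rotation hc = ha.rotation hc :=
  Equiv.ext fun x => Subtype.ext <| congrArg a <| hb.involutive (c x)

theorem IsFlip.card_eq_two_mul [Finite F] (ha : IsFlip U a) : Nat.card F = 2 * Nat.card U := by
  have card_compl : Nat.card U = Nat.card (Uᶜ : Set F) :=
    Nat.card_congr <| ha.involutive.toPerm.subtypeEquiv fun x => by simp [ha.apply_mem_iff]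
  rw [← Nat.card_congr (Equiv.Set.sumCompl U), Nat.card_sum, ← card_compl, two_mul]

theorem mem_iff_mem_of_orbitRel {fs : Set (F → F)} {S : Set F}
    (hS : ∀ g ∈ fs, ∀ x, g x ∈ S ↔ x ∈ S) {x y : F} (hxy : orbitRel fs x y) : x ∈ S ↔ y ∈ S := by
  induction hxy with
  | rel x _ h =>
    obtain ⟨g, hg, rfl⟩ := h
    exact (hS g hg x).symm
  | refl => rfl
  | symm _ _ _ ih => exact ih.symm
  | trans _ _ _ _ _ ih₁ ih₂ => exact ih₁.trans ih₂

theorem orbitRel_apply {fs : Set (F → F)} {g : F → F} (hg : g ∈ fs) (x : F) :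
    orbitRel fs x (g x) :=
  .rel _ _ ⟨g, hg, rfl⟩

theorem orbitRel_of_sameCycle {fs : Set (F → F)} {σ : Equiv.Perm F}
    (hσ : ∀ x, orbitRel fs x (σ x)) {x y : F} (hxy : σ.SameCycle x y) : orbitRel fs x y := by
  obtain ⟨k, rfl⟩ := hxy
  induction k using Int.induction_on with
  | zero => exact .refl x
  | succ k ih =>
    rw [add_comm, zpow_one_add]
    exact ih.trans _ _ _ (hσ _)
  | pred k ih =>
    have hstep : orbitRel fs ((σ ^ (-(k : ℤ) - 1)) x) ((σ ^ (-(k : ℤ))) x) := by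
      simpa [← Equiv.Perm.mul_apply, ← zpow_one_add] using hσ ((σ ^ (-(k : ℤ) - 1)) x)
    exact ih.trans _ _ _ (.symm _ _ hstep)

/-- In the dihedral group `⟨a, b⟩` every element is a power of `ab`, or `a` times such a power. -/
theorem orbitRel_pair_iff (ha : Function.Involutive a) (hb : Function.Involutive b) {x y : F} :
    orbitRel {a, b} x y ↔
      (ha.toPerm * hb.toPerm).SameCycle x y ∨ (ha.toPerm * hb.toPerm).SameCycle x (a y) := by
  set σ := ha.toPerm * hb.toPerm
  have orbitRel_a (z : F) : orbitRel {a, b} z (a z) := orbitRel_apply (by simp) z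
  have orbitRel_b (z : F) : orbitRel {a, b} z (b z) := orbitRel_apply (by simp) z
  have orbitRel_σ (z : F) : orbitRel {a, b} z (σ z) :=
    (orbitRel_b z).trans _ _ _ (orbitRel_a (b z))
  constructor
  · have invariant : ∀ g ∈ ({a, b} : Set (F → F)), ∀ z,
        g z ∈ {y | σ.SameCycle x y ∨ σ.SameCycle x (a y)} ↔
          z ∈ {y | σ.SameCycle x y ∨ σ.SameCycle x (a y)} := by
      rintro g (rfl | rfl) z
      · simp only [Set.mem_ofPred_eq, ha z, or_comm]
      · have apply_b : σ (g z) = a z := congrArg a (hb z)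
        have sameCycle_b : σ.SameCycle x (g z) ↔ σ.SameCycle x (a z) := by
          rw [← apply_b, Equiv.Perm.sameCycle_apply_right]
        have sameCycle_ab : σ.SameCycle x (a (g z)) ↔ σ.SameCycle x z :=
          Equiv.Perm.sameCycle_apply_right
        simp only [Set.mem_ofPred_eq, sameCycle_b, sameCycle_ab, or_comm]
    exact fun h => (mem_iff_mem_of_orbitRel invariant h).1 (.inl (.refl σ x))
  · rintro (h | h)
    · exact orbitRel_of_sameCycle orbitRel_σ h
    · exact (orbitRel_of_sameCycle orbitRel_σ h).trans _ _ _ (.symm _ _ (orbitRel_a y))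

theorem IsFlip.sameCycle_rotation_iff (ha : IsFlip U a) (hb : IsFlip U b) {x y : U} :
    (ha.rotation hb).SameCycle x y ↔ orbitRel {a, b} (x : F) y := by
  have not_sameCycle_apply :
      ¬ (ha.involutive.toPerm * hb.involutive.toPerm).SameCycle (x : F) (a y) := by
    rintro ⟨k, hk⟩
    have apply_eq : a y = ((ha.rotation hb ^ k) x : U) := by
      rw [rotation, Equiv.Perm.subtypePerm_zpow]
      exact hk.symm
    exact (ha.apply_mem_iff y).1 (apply_eq ▸ Subtype.coe_prop _) y.2
  rw [orbitRel_pair_iff ha.involutive hb.involutive, or_iff_left not_sameCycle_apply, rotation,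
    Equiv.Perm.sameCycle_subtypePerm]

theorem IsFlip.orbitCount_pair (ha : IsFlip U a) (hb : IsFlip U b) :
    orbitCount {a, b} = Nat.card (Quotient (Equiv.Perm.SameCycle.setoid (ha.rotation hb))) := by
  let orbitOf (x : U) : Quotient (orbitSetoid {a, b}) := Quotient.mk _ (x : F)
  have setoid_eq_ker : Equiv.Perm.SameCycle.setoid (ha.rotation hb) = Setoid.ker orbitOf :=
    Setoid.ext fun _ _ => (ha.sameCycle_rotation_iff hb).trans <|
      (Quotient.eq (r := orbitSetoid {a, b})).symm
  have orbitOf_surjective : Function.Surjective orbitOf := by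
    rintro ⟨x⟩
    by_cases hx : x ∈ U
    · exact ⟨⟨x, hx⟩, rfl⟩
    · exact ⟨⟨a x, (ha.apply_mem_iff x).2 hx⟩,
        Quotient.sound (.symm _ _ (orbitRel_apply (by simp) x))⟩
  rw [setoid_eq_ker]
  exact Nat.card_congr (Setoid.quotientKerEquivOfSurjective _ orbitOf_surjective).symm

theorem IsFlip.sign_rotation [Fintype U] [DecidableEq U] (ha : IsFlip U a) (hb : IsFlip U b) :
    Equiv.Perm.sign (ha.rotation hb) = (-1) ^ (orbitCount {a, b} + Nat.card U) := by
  rw [sign_eq_neg_one_pow_card_quotient_sameCycle, ha.orbitCount_pair hb,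
    Nat.card_eq_fintype_card (α := U)]

theorem IsFlip.even_orbitCount_add [Finite U] (ha : IsFlip U a) (hb : IsFlip U b)
    (hc : IsFlip U c) :
    Even (orbitCount {b, c} + orbitCount {a, c} + orbitCount {a, b} + Nat.card U) := by
  have := Fintype.ofFinite U
  have sign_mul : Equiv.Perm.sign (ha.rotation hb) * Equiv.Perm.sign (hb.rotation hc) *
      Equiv.Perm.sign (ha.rotation hc) = 1 := by
    rw [← map_mul, ha.rotation_mul_rotation hb hc, Int.units_mul_self]
  rw [ha.sign_rotation hb, hb.sign_rotation hc, ha.sign_rotation hc, ← pow_add, ← pow_add,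
    neg_one_pow_eq_one_iff_even (by decide)] at sign_mul
  grind

end Flips

variable {F : Type*} {H : PreHypermap F}

theorem Orientable.exists_isFlip (hor : H.Orientable) (hH : H.IsHypermap) :
    ∃ U : Set F, ∀ i, IsFlip U (H.theta i) := by
  obtain ⟨o, ho, ho_theta⟩ := hor
  refine ⟨{x | o x = 1}, fun i => ⟨(hH i).1, fun x => ?_⟩⟩
  rw [Set.mem_ofPred_eq, Set.mem_ofPred_eq, ho_theta]
  grind

theorem even_eulerGenus [Finite F] (hH : H.IsHypermap) (hor : H.Orientable) :
    Even H.eulerGenus := by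
  obtain ⟨U, hU⟩ := hor.exists_isFlip hH
  have even_sum : Even (H.v + H.e + H.f + Nat.card U) := (hU 0).even_orbitCount_add (hU 1) (hU 2)
  have card_flags : Nat.card F = 2 * Nat.card U := (hU 0).card_eq_two_mul
  unfold eulerGenus chi
  grind

theorem Orientable.pdual (hor : H.Orientable) (S : Set F) : (H.pdual S).Orientable := by
  obtain ⟨o, ho, ho_theta⟩ := hor
  refine ⟨o, ho, fun i x => ?_⟩
  simp only [PreHypermap.pdual]
  split_ifs <;> exact ho_theta _ _

theorem IsHypermap.pdual (hH : H.IsHypermap) {S : Set F}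
    (hS : ∀ i ≠ 1, ∀ x, H.theta i x ∈ S ↔ x ∈ S) : (H.pdual S).IsHypermap := by
  intro i
  by_cases hi : i = 1
  · subst hi
    exact hH 1
  have two_sub_ne : 2 - i ≠ 1 := by decide +revert
  refine ⟨fun x => ?_, fun x => ?_⟩
  · by_cases hx : x ∈ S
    · simp only [PreHypermap.pdual, hi, hx, hS _ two_sub_ne, if_true, if_false, (hH _).1 x]
    · simp only [PreHypermap.pdual, hi, hx, hS _ hi, if_false, (hH _).1 x]
  · simp only [PreHypermap.pdual, hi, if_false]
    split_ifs <;> exact (hH _).2 x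

theorem theta_mem_sUnion_iff {A : Set (Set F)} (hA : A ⊆ H.edges) {i : Fin 3} (hi : i ≠ 1)
    (x : F) : H.theta i x ∈ ⋃₀ A ↔ x ∈ ⋃₀ A := by
  have hstep : orbitRel {H.theta 0, H.theta 2} x (H.theta i x) :=
    orbitRel_apply (by fin_cases i <;> simp at hi ⊢) x
  refine exists_congr fun s => and_congr_right fun hs => ?_
  obtain ⟨y, rfl⟩ := hA hs
  exact ⟨fun h => h.trans _ _ _ (.symm _ _ hstep), fun h => h.trans _ _ _ hstep⟩

theorem even_eulerGenus_pdual [Finite F] (hH : H.IsHypermap) (hor : H.Orientable)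
    {A : Set (Set F)} (hA : A ⊆ H.edges) : Even (H.pdual (⋃₀ A)).eulerGenus :=
  even_eulerGenus (hH.pdual fun _ hi => theta_mem_sUnion_iff hA hi) (hor.pdual _)

theorem pdPoly_eq_pdGammaPoly_comp [Fintype F]
    (heven : ∀ A ⊆ H.edges, Even (H.pdual (⋃₀ A)).eulerGenus) :
    H.pdPoly = H.pdGammaPoly.comp (Polynomial.X ^ 2) := by
  rw [pdPoly, pdGammaPoly, Polynomial.sum_comp]
  refine Finset.sum_congr rfl fun A hA => ?_
  have hA_edges : (A : Set (Set F)) ⊆ H.edges := by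
    simpa [edgeFinset, Set.Finite.subset_toFinset] using hA
  obtain ⟨g, hg⟩ := heven A hA_edges
  rw [Polynomial.X_pow_comp, ← pow_mul]
  congr 1
  omega

end PreHypermap

open PreHypermap in
theorem statement_8_general {F : Type*} [Fintype F] (H : PreHypermap F)
    (hH : H.IsHypermap) (hor : H.Orientable) :
    (∀ A ⊆ H.edges, Even (H.pdual (⋃₀ A)).eulerGenus) ∧
    H.pdPoly = H.pdGammaPoly.comp (Polynomial.X ^ 2) :=
  have heven : ∀ A ⊆ H.edges, Even (H.pdual (⋃₀ A)).eulerGenus :=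
    fun _ hA => even_eulerGenus_pdual hH hor hA
  ⟨heven, pdPoly_eq_pdGammaPoly_comp heven⟩

open PreHypermap in
/-- For a connected orientable hypermap every partial-dual Euler genus is even, and
`∂ε_H(z) = ∂Γ_H(z²)`. -/
theorem statement_8 {F : Type} [Fintype F] (H : PreHypermap F)
    (hH : H.IsHypermap) (hconn : H.Connected) (hor : H.Orientable) :
    (∀ A ⊆ H.edges, Even (H.pdual (⋃₀ A)).eulerGenus) ∧
    H.pdPoly = H.pdGammaPoly.comp (Polynomial.X ^ 2) :=
  statement_8_general H hH hor
end

section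
/- For every positive integer N there exist a connected combinatorial hypermap H and integers a < b such that a and b both belong to the set {ε(H^A) : A ⊆ E(H)}, no element of this set lies strictly between a and b, and b − a − 1 ≥ N. In other words, gaps in the spectrum of the partial-dual Euler-genus polynomial can be arbitrarily large. -/
open Classical

/-! The witness glues two identical hyperedges along their whole boundary: `θ₁` exchanges two copies
of a set `X` of `2m` flags, while `θ₀` and `θ₂` act on each copy as fixed-point-free involutions `α`
and `β` that together act transitively on `X`. The copies are then the hyperedges, and a partial
dual amounts to choosing on which copies `α` and `β` trade places. Vertices and faces correspond to
the orbits on `X` of the involutions induced by the two copies: if the copies agree, these are the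
`m` orbits of `α` and the `m` orbits of `β`, giving a sphere; if they differ, there is a single
vertex and a single face, and the Euler genus is `2m - 2`. -/

namespace PreHypermap

section Orbits

variable {F G : Type*} {fs : Set (F → F)}

lemma orbitRel_refl (x : F) : orbitRel fs x x :=
  Relation.EqvGen.refl x

lemma orbitRel.symm {x y : F} (h : orbitRel fs x y) : orbitRel fs y x :=
  Relation.EqvGen.symm _ _ h

lemma orbitRel.trans {x y z : F} (hxy : orbitRel fs x y) (hyz : orbitRel fs y z) :
    orbitRel fs x z :=
  Relation.EqvGen.trans _ _ _ hxy hyz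

lemma orbitRel_apply_s9 {f : F → F} (hf : f ∈ fs) (x : F) : orbitRel fs x (f x) :=
  Relation.EqvGen.rel _ _ ⟨f, hf, rfl⟩

lemma orbitRel.map {x y : F} (hxy : orbitRel fs x y) (r : Setoid G) (g : F → G)
    (hg : ∀ f ∈ fs, ∀ z, r (g z) (g (f z))) : r (g x) (g y) := by
  have orbitSetoid_le_comap : orbitSetoid fs ≤ r.comap g := by
    refine Setoid.eqvGen_le ?_
    rintro z _ ⟨f, hf, rfl⟩
    exact hg f hf z
  exact orbitSetoid_le_comap hxy

lemma orbitRel.mono {x y : F} (hxy : orbitRel fs x y) {gs : Set (F → F)} (h : fs ⊆ gs) :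
    orbitRel gs x y :=
  hxy.map (orbitSetoid gs) id fun _ hf => orbitRel_apply_s9 (h hf)

lemma orbitCount_eq_card {q : F → G} (hq : Function.Surjective q)
    (h : ∀ x y, orbitRel fs x y ↔ q x = q y) : orbitCount fs = Nat.card G := by
  have orbitSetoid_eq_ker : orbitSetoid fs = Setoid.ker q := Setoid.ext h
  rw [orbitCount, orbitSetoid_eq_ker]
  exact Nat.card_congr (Setoid.quotientKerEquivOfSurjective q hq)

lemma orbitCount_eq_one [Nonempty F] (h : ∀ x y, orbitRel fs x y) : orbitCount fs = 1 := by
  rw [orbitCount_eq_card (q := fun _ : F => ()) (Function.surjective_to_subsingleton _)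
    (fun x y => iff_of_true (h x y) rfl), Nat.card_unique]

end Orbits

section FixedPointFreeInvolution

variable {X : Type*} {f : X → X}

/-- Fixed-point-free involutions, the condition that a combinatorial hypermap imposes on each of its
structure maps. -/
def IsFixedPointFreeInvolution (f : X → X) : Prop :=
  Function.Involutive f ∧ ∀ x, f x ≠ x

lemma orbitRel_singleton_iff (hf : Function.Involutive f) {x y : X} :
    orbitRel {f} x y ↔ y = x ∨ y = f x := by
  constructor
  · intro h
    induction h with
    | rel x y h => obtain ⟨_, rfl, rfl⟩ := h; exact .inr rfl
    | refl => exact .inl rfl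
    | symm x y _ ih => exact ih.imp Eq.symm fun h => hf.eq_iff.mp h.symm
    | trans x y z _ _ hxy hyz =>
      rcases hxy with rfl | rfl
      · exact hyz
      · rw [hf x] at hyz
        exact hyz.symm
  · rintro (rfl | rfl)
    · exact orbitRel_refl _
    · exact orbitRel_apply_s9 (Set.mem_singleton f) x

lemma two_mul_orbitCount_singleton (hf : IsFixedPointFreeInvolution f) :
    2 * orbitCount {f} = Nat.card X := by
  let flag : Quotient (orbitSetoid {f}) × Bool → X := fun p => if p.2 then f p.1.out else p.1.out
  have mk_flag (p : Quotient (orbitSetoid {f}) × Bool) : ⟦flag p⟧ = p.1 := by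
    obtain ⟨q, _ | _⟩ := p
    · exact q.out_eq
    · exact (Quotient.sound (orbitRel_apply_s9 (Set.mem_singleton f) q.out).symm).trans q.out_eq
  have flag_bijective : Function.Bijective flag := by
    constructor
    · rintro ⟨q, b⟩ ⟨q', b'⟩ hqq'
      obtain rfl : q = q' := (mk_flag _).symm.trans ((congrArg _ hqq').trans (mk_flag _))
      cases b <;> cases b' <;> simp_all [flag, hf.2, (hf.2 _).symm]
    · intro x
      rcases (orbitRel_singleton_iff hf.1).mp (Quotient.mk_out (s := orbitSetoid {f}) x) with h | h
      · exact ⟨(⟦x⟧, false), h.symm⟩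
      · exact ⟨(⟦x⟧, true), h.symm⟩
  rw [← Nat.card_congr (Equiv.ofBijective flag flag_bijective), Nat.card_prod, mul_comm]
  simp [orbitCount]

lemma isFixedPointFreeInvolution_sub_left {M : Type*} [AddCommGroup M] {k : M} (hk : ¬ Even k) :
    IsFixedPointFreeInvolution fun x : M => k - x :=
  ⟨sub_sub_cancel k, fun x hx => hk ⟨x, sub_eq_iff_eq_add.mp hx⟩⟩

end FixedPointFreeInvolution

lemma not_even_one_zmod_two_mul (m : ℕ) : ¬ Even (1 : ZMod (2 * m)) := fun h => by
  obtain ⟨r, one_eq_add_self⟩ : Even (1 : ZMod 2) := by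
    simpa using h.map (ZMod.castHom (Nat.dvd_mul_right 2 m) (ZMod 2))
  rw [CharTwo.add_self_eq_zero] at one_eq_add_self
  exact one_ne_zero one_eq_add_self

lemma orbitRel_zmod_reflections {n : ℕ} [NeZero n] (x y : ZMod n) :
    orbitRel {(1 - ·), (-1 - ·)} x y := by
  have reflect_one (z : ZMod n) : orbitRel {(1 - ·), (-1 - ·)} z (1 - z) :=
    orbitRel_apply_s9 (f := (1 - ·)) (by simp) z
  have reflect_neg_one (z : ZMod n) : orbitRel {(1 - ·), (-1 - ·)} z (-1 - z) :=
    orbitRel_apply_s9 (f := (-1 - ·)) (by simp) z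
  have shift_two (z : ZMod n) : orbitRel {(1 - ·), (-1 - ·)} z (z + 2) := by
    convert (reflect_neg_one z).trans (reflect_one _) using 1
    ring
  have zero_natCast (k : ℕ) : orbitRel {(1 - ·), (-1 - ·)} (0 : ZMod n) k := by
    induction k using Nat.twoStepInduction with
    | zero => simpa using orbitRel_refl (0 : ZMod n)
    | one => simpa using reflect_one 0
    | more k ih _ => simpa using ih.trans (shift_two k)
  obtain ⟨i, rfl⟩ := ZMod.natCast_zmod_surjective x
  obtain ⟨j, rfl⟩ := ZMod.natCast_zmod_surjective y
  exact (zero_natCast i).symm.trans (zero_natCast j)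

section TwoSheeted

variable {X : Type*}

/-- The map of two copies of `X`, indexed by `Bool`, that acts on the copy `s` as `γ s`. -/
def sheetwise (γ : Bool → X → X) (x : Bool × X) : Bool × X := (x.1, γ x.1 x.2)

/-- The exchange of the two copies of `X`. -/
def swapSheets (x : Bool × X) : Bool × X := (!x.1, x.2)

/-- The hypermap on two copies of `X` in which `θ₁` exchanges the copies, while `θ₀` and `θ₂` act
on the copy `s` as `α s` and `β s`. -/
def twoSheeted (α β : Bool → X → X) : PreHypermap (Bool × X) where
  theta := ![sheetwise α, swapSheets, sheetwise β]

lemma theta_zero_twoSheeted (α β : Bool → X → X) : (twoSheeted α β).theta 0 = sheetwise α := rfl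

lemma theta_one_twoSheeted (α β : Bool → X → X) : (twoSheeted α β).theta 1 = swapSheets := rfl

lemma theta_two_twoSheeted (α β : Bool → X → X) : (twoSheeted α β).theta 2 = sheetwise β := rfl

lemma IsFixedPointFreeInvolution.sheetwise {γ : Bool → X → X}
    (hγ : ∀ s, IsFixedPointFreeInvolution (γ s)) :
    IsFixedPointFreeInvolution (sheetwise γ) :=
  ⟨fun x => Prod.ext rfl ((hγ x.1).1 x.2), fun x hx => (hγ x.1).2 x.2 (congrArg Prod.snd hx)⟩

lemma isFixedPointFreeInvolution_swapSheets :
    IsFixedPointFreeInvolution (swapSheets : Bool × X → Bool × X) :=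
  ⟨fun x => Prod.ext (Bool.not_not x.1) rfl,
    fun x hx => Bool.not_ne_self x.1 (congrArg Prod.fst hx)⟩

lemma isHypermap_twoSheeted {α β : Bool → X → X} (hα : ∀ s, IsFixedPointFreeInvolution (α s))
    (hβ : ∀ s, IsFixedPointFreeInvolution (β s)) : (twoSheeted α β).IsHypermap
  | 0 => IsFixedPointFreeInvolution.sheetwise hα
  | 1 => isFixedPointFreeInvolution_swapSheets
  | 2 => IsFixedPointFreeInvolution.sheetwise hβ

lemma pdual_twoSheeted (α β : Bool → X → X) (P : Set Bool) :
    (twoSheeted α β).pdual (Prod.fst ⁻¹' P) =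
      twoSheeted (P.piecewise β α) (P.piecewise α β) := by
  refine congrArg PreHypermap.mk (funext₂ fun i x => ?_)
  by_cases hx : x.1 ∈ P <;> fin_cases i <;> simp [twoSheeted, sheetwise, hx]

lemma orbitRel_insert_swapSheets_iff (Γ : Set (Bool → X → X)) (x y : Bool × X) :
    orbitRel (insert swapSheets (sheetwise '' Γ)) x y ↔
      orbitRel (⋃ γ ∈ Γ, Set.range γ) x.2 y.2 := by
  constructor
  · intro hxy
    refine hxy.map (orbitSetoid (⋃ γ ∈ Γ, Set.range γ)) Prod.snd ?_
    rintro _ (rfl | ⟨γ, hγ, rfl⟩) z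
    · exact orbitRel_refl z.2
    · exact orbitRel_apply_s9 (Set.mem_biUnion hγ (Set.mem_range_self z.1)) z.2
  · have change_sheet (s t : Bool) (z : X) :
        orbitRel (insert swapSheets (sheetwise '' Γ)) (s, z) (t, z) := by
      obtain rfl | rfl := Bool.eq_or_eq_not t s
      · exact orbitRel_refl _
      · exact orbitRel_apply_s9 (Set.mem_insert _ _) (s, z)
    intro hxy
    refine orbitRel.trans (y := (x.1, y.2)) ?_ (change_sheet x.1 y.1 y.2)
    refine hxy.map (orbitSetoid (insert swapSheets (sheetwise '' Γ))) (Prod.mk x.1) ?_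
    intro f hf z
    obtain ⟨γ, hγ, s, rfl⟩ := Set.mem_iUnion₂.mp hf
    exact (change_sheet x.1 s z).trans
      ((orbitRel_apply_s9 (.inr (Set.mem_image_of_mem sheetwise hγ)) (s, z)).trans
        (change_sheet s x.1 _))

lemma orbitCount_insert_swapSheets (Γ : Set (Bool → X → X)) :
    orbitCount (insert swapSheets (sheetwise '' Γ)) = orbitCount (⋃ γ ∈ Γ, Set.range γ) := by
  refine orbitCount_eq_card (q := fun x => Quotient.mk (orbitSetoid (⋃ γ ∈ Γ, Set.range γ)) x.2)
    (Quotient.mk_surjective.comp Prod.snd_surjective) fun x y => ?_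
  rw [orbitRel_insert_swapSheets_iff, Quotient.eq]
  rfl

variable {α β : Bool → X → X}

lemma v_twoSheeted : (twoSheeted α β).v = orbitCount (Set.range β) := by
  rw [v, theta_one_twoSheeted, theta_two_twoSheeted, ← Set.image_singleton,
    orbitCount_insert_swapSheets, Set.biUnion_singleton]

lemma f_twoSheeted : (twoSheeted α β).f = orbitCount (Set.range α) := by
  rw [f, theta_zero_twoSheeted, theta_one_twoSheeted, Set.pair_comm, ← Set.image_singleton,
    orbitCount_insert_swapSheets, Set.biUnion_singleton]

lemma c_twoSheeted : (twoSheeted α β).c = orbitCount (Set.range α ∪ Set.range β) := by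
  rw [c, theta_zero_twoSheeted, theta_one_twoSheeted, theta_two_twoSheeted, Set.insert_comm,
    ← Set.image_pair, orbitCount_insert_swapSheets, Set.biUnion_pair]

lemma connected_twoSheeted [Nonempty X] {s : Bool} (h : ∀ x y, orbitRel {α s, β s} x y) :
    (twoSheeted α β).Connected := by
  have sheet_subset : {α s, β s} ⊆ Set.range α ∪ Set.range β :=
    Set.pair_subset (.inl ⟨s, rfl⟩) (.inr ⟨s, rfl⟩)
  rw [Connected, c_twoSheeted]
  exact orbitCount_eq_one fun x y => (h x y).mono sheet_subset

lemma orbitRel_edge_twoSheeted_iff (h : ∀ s x y, orbitRel {α s, β s} x y) (x y : Bool × X) :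
    orbitRel {(twoSheeted α β).theta 0, (twoSheeted α β).theta 2} x y ↔ x.1 = y.1 := by
  rw [theta_zero_twoSheeted, theta_two_twoSheeted]
  constructor
  · intro hxy
    refine hxy.map ⊥ Prod.fst ?_
    rintro _ (rfl | rfl) z <;> rfl
  · obtain ⟨s, x⟩ := x
    obtain ⟨t, y⟩ := y
    rintro rfl
    refine (h s x y).map (orbitSetoid {sheetwise α, sheetwise β}) (Prod.mk s) ?_
    rintro _ (rfl | rfl) z
    · exact orbitRel_apply_s9 (f := sheetwise α) (.inl rfl) (s, z)
    · exact orbitRel_apply_s9 (f := sheetwise β) (.inr rfl) (s, z)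

lemma e_twoSheeted [Nonempty X] (h : ∀ s x y, orbitRel {α s, β s} x y) :
    (twoSheeted α β).e = 2 := by
  rw [e, orbitCount_eq_card Prod.fst_surjective (orbitRel_edge_twoSheeted_iff h),
    Nat.card_eq_fintype_card, Fintype.card_bool]

lemma edges_twoSheeted [Nonempty X] (h : ∀ s x y, orbitRel {α s, β s} x y) :
    (twoSheeted α β).edges = Set.range fun s => Prod.fst ⁻¹' {s} := by
  have edge_eq (x : Bool × X) :
      {y | orbitRel {(twoSheeted α β).theta 0, (twoSheeted α β).theta 2} x y} =
        Prod.fst ⁻¹' {x.1} := by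
    ext y
    exact (orbitRel_edge_twoSheeted_iff h x y).trans eq_comm
  ext S
  simp only [edges, edge_eq, Set.mem_ofPred_eq, Set.mem_range, Prod.exists, exists_const, eq_comm]

lemma eulerGenus_twoSheeted [Nonempty X] (h : ∀ s x y, orbitRel {α s, β s} x y) :
    (twoSheeted α β).eulerGenus =
      Nat.card X - orbitCount (Set.range α) - orbitCount (Set.range β) := by
  have c_eq_one : (twoSheeted α β).c = 1 := connected_twoSheeted (h true)
  have card_flags : (Nat.card (Bool × X) : ℤ) / 2 = Nat.card X := by
    simp [Nat.card_prod]
  rw [eulerGenus, chi, c_eq_one, v_twoSheeted, e_twoSheeted h, f_twoSheeted, card_flags]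
  ring

end TwoSheeted

/-- The spectrum of the partial-dual Euler-genus polynomial: the Euler genera of all partial duals
of `H`. -/
def eulerGenusSpectrum {F : Type*} (H : PreHypermap F) : Set ℤ :=
  {g | ∃ A ⊆ H.edges, (H.pdual (⋃₀ A)).eulerGenus = g}

section Double

variable {X : Type*}

/-- The two-sheeted hypermap whose sheets are identical: the hyperedge of `α` and `β` glued to a
copy of itself. -/
def double (α β : X → X) : PreHypermap (Bool × X) :=
  twoSheeted (fun _ => α) (fun _ => β)

variable [Nonempty X] {α β : X → X}

lemma eulerGenus_pdual_double (h : ∀ x y, orbitRel {α, β} x y) (P : Set Bool) :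
    ((double α β).pdual (Prod.fst ⁻¹' P)).eulerGenus =
      Nat.card X - orbitCount ((fun _ => β) '' P ∪ (fun _ => α) '' Pᶜ)
        - orbitCount ((fun _ => α) '' P ∪ (fun _ => β) '' Pᶜ) := by
  rw [double, pdual_twoSheeted, eulerGenus_twoSheeted, Set.range_piecewise, Set.range_piecewise]
  intro s
  by_cases hs : s ∈ P
  · simpa only [Set.piecewise_eq_of_mem _ _ _ hs, Set.pair_comm] using h
  · simpa only [Set.piecewise_eq_of_notMem _ _ _ hs] using h

lemma eulerGenusSpectrum_double_eq_range (h : ∀ x y, orbitRel {α, β} x y) :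
    (double α β).eulerGenusSpectrum =
      Set.range fun P : Set Bool => ((double α β).pdual (Prod.fst ⁻¹' P)).eulerGenus := by
  have sUnion_sheets (P : Set Bool) :
      ⋃₀ ((fun s => (Prod.fst ⁻¹' {s} : Set (Bool × X))) '' P) = Prod.fst ⁻¹' P := by
    ext x
    simp
  ext g
  rw [eulerGenusSpectrum, double, edges_twoSheeted fun _ => h]
  simp only [Set.mem_ofPred_eq, Set.exists_subset_range_and_iff, sUnion_sheets, Set.mem_range]

lemma eulerGenus_pdual_double_eq_zero (hα : IsFixedPointFreeInvolution α)
    (hβ : IsFixedPointFreeInvolution β) (h : ∀ x y, orbitRel {α, β} x y) {P : Set Bool}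
    (hP : P = ∅ ∨ P = Set.univ) :
    ((double α β).pdual (Prod.fst ⁻¹' P)).eulerGenus = 0 := by
  have card_α := two_mul_orbitCount_singleton hα
  have card_β := two_mul_orbitCount_singleton hβ
  rw [eulerGenus_pdual_double h]
  rcases hP with rfl | rfl
  · simp only [Set.image_empty, Set.compl_empty, Set.empty_union,
      Set.univ_nonempty.image_const]
    omega
  · simp only [Set.image_empty, Set.compl_univ, Set.union_empty,
      Set.univ_nonempty.image_const]
    omega

lemma eulerGenus_pdual_double_eq_card_sub_two (h : ∀ x y, orbitRel {α, β} x y) {P : Set Bool}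
    (hP : P.Nonempty) (hPc : Pᶜ.Nonempty) :
    ((double α β).pdual (Prod.fst ⁻¹' P)).eulerGenus = Nat.card X - 2 := by
  rw [eulerGenus_pdual_double h, hP.image_const, hP.image_const, hPc.image_const,
    hPc.image_const, Set.singleton_union, Set.singleton_union, Set.pair_comm β α,
    orbitCount_eq_one h]
  ring

lemma eulerGenusSpectrum_double (hα : IsFixedPointFreeInvolution α)
    (hβ : IsFixedPointFreeInvolution β) (h : ∀ x y, orbitRel {α, β} x y) :
    (double α β).eulerGenusSpectrum = {0, (Nat.card X : ℤ) - 2} := by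
  rw [eulerGenusSpectrum_double_eq_range h]
  refine Set.Subset.antisymm ?_ ?_
  · rintro _ ⟨P, rfl⟩
    rcases P.eq_empty_or_nonempty with hP | hP
    · exact .inl (eulerGenus_pdual_double_eq_zero hα hβ h (.inl hP))
    rcases Pᶜ.eq_empty_or_nonempty with hPc | hPc
    · exact .inl (eulerGenus_pdual_double_eq_zero hα hβ h (.inr (Set.compl_empty_iff.mp hPc)))
    · exact .inr (eulerGenus_pdual_double_eq_card_sub_two h hP hPc)
  · rintro _ (rfl | rfl)
    · exact ⟨∅, eulerGenus_pdual_double_eq_zero hα hβ h (.inl rfl)⟩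
    · exact ⟨{true}, eulerGenus_pdual_double_eq_card_sub_two h ⟨true, rfl⟩ ⟨false, by simp⟩⟩

end Double

end PreHypermap

open PreHypermap in
/-- Gaps in the spectrum of the partial-dual Euler-genus polynomial can be arbitrarily
large: for every `N > 0` there are a connected hypermap `H` and spectrum values `a < b`
with no spectrum value strictly between them and `b - a - 1 ≥ N`. -/
theorem statement_9 :
    ∀ N : ℕ, 0 < N →
      ∃ (F : Type) (_ : Fintype F) (H : PreHypermap F), H.IsHypermap ∧ H.Connected ∧
        ∃ a b : ℤ, a < b ∧
          (∃ A ⊆ H.edges, (H.pdual (⋃₀ A)).eulerGenus = a) ∧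
          (∃ B ⊆ H.edges, (H.pdual (⋃₀ B)).eulerGenus = b) ∧
          (∀ C ⊆ H.edges,
            ¬ (a < (H.pdual (⋃₀ C)).eulerGenus ∧ (H.pdual (⋃₀ C)).eulerGenus < b)) ∧
          (N : ℤ) ≤ b - a - 1 := by
  intro N _
  let α : ZMod (2 * (N + 2)) → ZMod (2 * (N + 2)) := (1 - ·)
  let β : ZMod (2 * (N + 2)) → ZMod (2 * (N + 2)) := (-1 - ·)
  have not_even_one := not_even_one_zmod_two_mul (N + 2)
  have hα : IsFixedPointFreeInvolution α := isFixedPointFreeInvolution_sub_left not_even_one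
  have hβ : IsFixedPointFreeInvolution β :=
    isFixedPointFreeInvolution_sub_left (even_neg.not.mpr not_even_one)
  have transitive : ∀ x y, orbitRel {α, β} x y := orbitRel_zmod_reflections
  have spectrum_eq : (double α β).eulerGenusSpectrum = {0, 2 * (N + 2 : ℤ) - 2} := by
    simpa using eulerGenusSpectrum_double hα hβ transitive
  refine ⟨_, inferInstance, double α β, isHypermap_twoSheeted (fun _ => hα) (fun _ => hβ),
    connected_twoSheeted (s := true) transitive, 0, 2 * (N + 2) - 2, by omega,
    spectrum_eq.ge (.inl rfl), spectrum_eq.ge (.inr rfl), fun C hC => ?_, by omega⟩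
  have genus_eq : ((double α β).pdual (⋃₀ C)).eulerGenus = 0 ∨
      ((double α β).pdual (⋃₀ C)).eulerGenus = 2 * (N + 2) - 2 := spectrum_eq.le ⟨C, hC, rfl⟩
  omega
end

section
/- There exists a connected orientable combinatorial hypermap H such that 0 and 2 both belong to the set {ε(H^A)/2 : A ⊆ E(H)} of partial-dual orientable genera, but 1 does not; in particular, the set of partial-dual orientable genera of a connected orientable hypermap need not be an interval of integers (the partial-dual genus polynomial is not always interpolating). -/
open Classical

/-!
Double a hyperedge: take two copies of a `2m`-gon of flags, with `θ₀` and `θ₂` acting on each copy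
as the two perfect matchings formed by its alternate sides, and let `θ₁` exchange the copies.
Collapsing `θ₁` identifies vertices (faces) with the orbits on a single polygon of the two maps that
`θ₂` (`θ₀`) induces on the copies. Dualising neither or both copies leaves one matching on both
copies, so there are `m` vertices, `m` faces and the genus is `0`. Dualising exactly one copy puts
different matchings on the two copies, and together they are transitive on the polygon: one vertex,
one face, genus `m - 1`. With `m = 3` the genera are `0` and `2`.

The `2m`-gon is the Cayley graph of `DihedralGroup m` on two adjacent reflections, so its matchings
are the left multiplications by `sr 0` and `sr 1`.
-/

namespace PreHypermap

/-- The set `{ε(H^A)/2 : A ⊆ E(H)}` of partial-dual orientable genera. The division is that of `ℤ`,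
which rounds down. -/
def partialDualGenera (H : PreHypermap F) : Set ℤ :=
  {g | ∃ A ⊆ H.edges, (H.pdual (⋃₀ A)).eulerGenus / 2 = g}

section Orbits

variable {Q : Type*} {fs : Set (F → F)}

theorem orbitSetoid_apply_of_mem {f : F → F} (hf : f ∈ fs) (x : F) : orbitSetoid fs x (f x) :=
  .rel _ _ ⟨f, hf, rfl⟩

theorem orbitSetoid_le_iff {s : Setoid F} :
    orbitSetoid fs ≤ s ↔ ∀ f ∈ fs, ∀ x, s x (f x) := by
  refine ⟨fun h f hf x ↦ h (orbitSetoid_apply_of_mem hf x), fun h ↦ Setoid.eqvGen_le ?_⟩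
  rintro x _ ⟨f, hf, rfl⟩
  exact h f hf x

theorem orbitCount_eq_card_of_ker_eq {q : F → Q} (hq : q.Surjective)
    (h : orbitSetoid fs = Setoid.ker q) : orbitCount fs = Nat.card Q := by
  rw [orbitCount, h]
  exact Nat.card_congr (Setoid.quotientKerEquivOfSurjective q hq)

theorem orbitCount_eq_one_of_eq_top [Nonempty F] (h : orbitSetoid fs = ⊤) : orbitCount fs = 1 := by
  have hker : orbitSetoid fs = Setoid.ker fun _ ↦ () := by rw [h, eq_comm, Setoid.eq_top_iff]; simp
  simpa using orbitCount_eq_card_of_ker_eq (fun _ ↦ ⟨Classical.arbitrary F, rfl⟩) hker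

theorem orbitSetoid_singleton_iff {f : F → F} (hf : f.Involutive) {x y : F} :
    orbitSetoid {f} x y ↔ y = x ∨ y = f x := by
  constructor
  · intro h
    induction h with
    | rel x y h => obtain ⟨_, rfl, rfl⟩ := h; exact .inr rfl
    | refl x => exact .inl rfl
    | symm x y _ ih => rcases ih with rfl | rfl <;> simp [hf _]
    | trans x y z _ _ ihxy ihyz =>
      rcases ihxy with rfl | rfl <;> rcases ihyz with rfl | rfl <;> simp [hf _]
  · rintro (rfl | rfl)
    · exact .refl _
    · exact orbitSetoid_apply_of_mem (Set.mem_singleton f) x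

theorem card_eq_two_mul_orbitCount_singleton [Finite F] {f : F → F} (hf : f.Involutive)
    (hfix : ∀ x, f x ≠ x) : Nat.card F = 2 * orbitCount {f} := by
  have := Fintype.ofFinite F
  let proj : F → Quotient (orbitSetoid {f}) := Quotient.mk _
  have hfibre (q) : (Finset.univ.filter (proj · = q)).card = 2 := by
    obtain ⟨x, rfl⟩ := q.exists_rep
    rw [← Finset.card_pair (hfix x).symm]
    congr 1
    ext y
    simp only [Finset.mem_filter, Finset.mem_univ, true_and, Finset.mem_insert,
      Finset.mem_singleton, ← orbitSetoid_singleton_iff hf]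
    exact Quotient.eq.trans (Setoid.comm' _)
  calc Nat.card F = ∑ q, (Finset.univ.filter (proj · = q)).card := by
        rw [Nat.card_eq_fintype_card, ← Finset.card_univ]
        exact Finset.card_eq_sum_card_fiberwise fun _ _ ↦ Finset.mem_coe.2 (Finset.mem_univ _)
    _ = 2 * orbitCount {f} := by
        simp only [hfibre, Finset.sum_const, Finset.card_univ, smul_eq_mul, mul_comm, orbitCount,
          Nat.card_eq_fintype_card]

end Orbits

section TwoLayered

variable {P : Type*} (a b : Bool → P → P)

/-- The self-map of `Bool × P` acting on layer `s` as `a s`. -/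
def layerwise (x : Bool × P) : Bool × P := (x.1, a x.1 x.2)

/-- The hypermap on two layers `{s} × P` of flags in which `θ₀` and `θ₂` act on layer `s` as `a s`
and `b s`, while `θ₁` exchanges the layers. Allowing different maps on the two layers makes this
family closed under dualising a layer. -/
def twoLayered : PreHypermap (Bool × P) where
  theta := ![layerwise a, Prod.map not id, layerwise b]

variable {a b}

theorem twoLayered_isHypermap (ha : ∀ s, (a s).Involutive ∧ ∀ p, a s p ≠ p)
    (hb : ∀ s, (b s).Involutive ∧ ∀ p, b s p ≠ p) : (twoLayered a b).IsHypermap := by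
  have hlayer {d : Bool → P → P} (hd : ∀ s, (d s).Involutive ∧ ∀ p, d s p ≠ p) :
      (layerwise d).Involutive ∧ ∀ x, layerwise d x ≠ x :=
    ⟨fun x ↦ Prod.ext rfl ((hd x.1).1 x.2), fun x h ↦ (hd x.1).2 x.2 (congrArg Prod.snd h)⟩
  intro i
  fin_cases i
  · exact hlayer ha
  · exact ⟨fun x ↦ Prod.ext x.1.not_not rfl, fun x ↦ by simp [twoLayered, Prod.ext_iff]⟩
  · exact hlayer hb

theorem twoLayered_orientable {o : P → ℤ} (ho : ∀ p, o p = 1 ∨ o p = -1)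
    (ha : ∀ s p, o (a s p) = -o p) (hb : ∀ s p, o (b s p) = -o p) :
    (twoLayered a b).Orientable := by
  refine ⟨fun x ↦ if x.1 then o x.2 else -o x.2, ?_, ?_⟩
  · rintro ⟨_ | _, p⟩ <;> rcases ho p with h | h <;> simp [h]
  · intro i
    fin_cases i <;> rintro ⟨_ | _, p⟩ <;> simp [twoLayered, layerwise, ha, hb]

theorem orbitSetoid_layerwise_pair (h : ∀ s, orbitSetoid {a s, b s} = ⊤) :
    orbitSetoid {layerwise a, layerwise b} = Setoid.ker Prod.fst := by
  apply le_antisymm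
  · rw [orbitSetoid_le_iff]
    rintro _ (rfl | rfl) x <;> rfl
  · rintro ⟨s, p⟩ ⟨_, q⟩ rfl
    have hle : orbitSetoid {a s, b s} ≤
        (orbitSetoid {layerwise a, layerwise b}).comap (Prod.mk s) := by
      rw [orbitSetoid_le_iff]
      rintro _ (rfl | rfl) p
      · exact orbitSetoid_apply_of_mem (f := layerwise a) (by simp) (s, p)
      · exact orbitSetoid_apply_of_mem (f := layerwise b) (by simp) (s, p)
    exact hle (h s ▸ trivial : orbitSetoid {a s, b s} p q)

theorem orbitCount_swap_layerwise (d : Bool → P → P) :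
    orbitCount {Prod.map not id, layerwise d} = orbitCount {d false, d true} := by
  set swap : Bool × P → Bool × P := Prod.map not id
  set r : Setoid (Bool × P) := orbitSetoid {swap, layerwise d}
  let proj (x : Bool × P) : Quotient (orbitSetoid {d false, d true}) := ⟦x.2⟧
  have hswap (s t : Bool) (p : P) : r (s, p) (t, p) := by
    obtain rfl | rfl := Bool.eq_or_eq_not t s
    · exact r.refl' _
    · exact orbitSetoid_apply_of_mem (f := swap) (by simp) (s, p)
  have hmove (s t : Bool) (p : P) : r (s, p) (s, d t p) :=
    r.trans' (hswap s t p) <| r.trans'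
      (orbitSetoid_apply_of_mem (f := layerwise d) (by simp) (t, p)) (hswap t s (d t p))
  refine orbitCount_eq_card_of_ker_eq (q := proj) (fun q ↦ ?_) (le_antisymm ?_ ?_)
  · obtain ⟨p, rfl⟩ := q.exists_rep
    exact ⟨(true, p), rfl⟩
  · rw [orbitSetoid_le_iff]
    rintro _ (rfl | rfl) ⟨s, p⟩
    · rfl
    · exact Quotient.sound (orbitSetoid_apply_of_mem (by cases s <;> simp) p)
  · rintro ⟨s, p⟩ ⟨t, q⟩ h
    have hle : orbitSetoid {d false, d true} ≤ r.comap (Prod.mk s) := by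
      rw [orbitSetoid_le_iff]
      rintro _ (rfl | rfl) p <;> exact hmove s _ p
    exact r.trans' (hle (Quotient.exact h)) (hswap s t q)

theorem v_twoLayered : (twoLayered a b).v = orbitCount {b false, b true} :=
  orbitCount_swap_layerwise b

theorem f_twoLayered : (twoLayered a b).f = orbitCount {a false, a true} := by
  rw [f, Set.pair_comm]
  exact orbitCount_swap_layerwise a

theorem pdual_twoLayered (T : Set Bool) :
    (twoLayered a b).pdual (Prod.fst ⁻¹' T) =
      twoLayered (fun s ↦ if s ∈ T then b s else a s) (fun s ↦ if s ∈ T then a s else b s) := by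
  simp only [pdual, twoLayered, mk.injEq]
  funext i x
  fin_cases i <;> by_cases hx : x.1 ∈ T <;> simp [layerwise, hx]

variable [Nonempty P]

theorem e_twoLayered (h : ∀ s, orbitSetoid {a s, b s} = ⊤) : (twoLayered a b).e = 2 := by
  have hcard := orbitCount_eq_card_of_ker_eq Prod.fst_surjective (orbitSetoid_layerwise_pair h)
  exact hcard.trans (by simp)

theorem twoLayered_connected (h : ∀ s, orbitSetoid {a s, b s} = ⊤) :
    (twoLayered a b).Connected := by
  let r := orbitSetoid {layerwise a, Prod.map not id, layerwise b}
  have hlayer : Setoid.ker Prod.fst ≤ r := by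
    rw [← orbitSetoid_layerwise_pair h, orbitSetoid_le_iff]
    rintro d (rfl | rfl) x <;> exact orbitSetoid_apply_of_mem (by simp) x
  have hswap (x) : r x (Prod.map not id x) := orbitSetoid_apply_of_mem (by simp) x
  have htop : r = ⊤ := by
    refine Setoid.eq_top_iff.2 fun x y ↦ ?_
    obtain hxy | hxy := Bool.eq_or_eq_not y.1 x.1
    · exact hlayer hxy.symm
    · exact r.trans' (hswap x) (hlayer hxy.symm)
  exact orbitCount_eq_one_of_eq_top htop

theorem eulerGenus_twoLayered (h : ∀ s, orbitSetoid {a s, b s} = ⊤) :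
    (twoLayered a b).eulerGenus =
      Nat.card P - orbitCount {a false, a true} - orbitCount {b false, b true} := by
  have hc : (twoLayered a b).c = 1 := twoLayered_connected h
  rw [eulerGenus, chi, hc, e_twoLayered h, v_twoLayered, f_twoLayered, Nat.card_prod]
  simp only [Nat.card_eq_fintype_card, Fintype.card_bool]
  omega

theorem edges_twoLayered (h : ∀ s, orbitSetoid {a s, b s} = ⊤) :
    (twoLayered a b).edges = Set.range fun s ↦ Prod.fst ⁻¹' {s} := by
  have horbit (x : Bool × P) :
      {y | orbitRel {(twoLayered a b).theta 0, (twoLayered a b).theta 2} x y} =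
        Prod.fst ⁻¹' {x.1} := by
    ext y
    change orbitSetoid {layerwise a, layerwise b} x y ↔ y.1 = x.1
    rw [orbitSetoid_layerwise_pair h]
    exact eq_comm
  ext S
  simp only [edges, horbit, Set.mem_ofPred_eq, Set.mem_range, Prod.exists, exists_const,
    eq_comm (a := S)]

theorem mem_partialDualGenera_twoLayered (h : ∀ s, orbitSetoid {a s, b s} = ⊤) {g : ℤ} :
    g ∈ (twoLayered a b).partialDualGenera ↔
      ∃ T : Set Bool, ((twoLayered a b).pdual (Prod.fst ⁻¹' T)).eulerGenus / 2 = g := by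
  simp only [partialDualGenera, edges_twoLayered h, Set.mem_ofPred_eq,
    Set.subset_range_iff_exists_image_eq]
  constructor
  · rintro ⟨_, ⟨T, rfl⟩, hg⟩
    rw [Set.sUnion_image, Set.biUnion_preimage_singleton] at hg
    exact ⟨T, hg⟩
  · rintro ⟨T, hg⟩
    rw [← Set.biUnion_preimage_singleton, ← Set.sUnion_image] at hg
    exact ⟨_, ⟨T, rfl⟩, hg⟩

end TwoLayered

section ConstantLayers

variable {P : Type*} [Nonempty P] [Finite P] {α β : P → P}

theorem eulerGenus_pdual_twoLayered_const (hα : α.Involutive ∧ ∀ p, α p ≠ p)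
    (hβ : β.Involutive ∧ ∀ p, β p ≠ p) (h : orbitSetoid {α, β} = ⊤) (T : Set Bool) :
    ((twoLayered (fun _ ↦ α) (fun _ ↦ β)).pdual (Prod.fst ⁻¹' T)).eulerGenus =
      if false ∈ T ↔ true ∈ T then 0 else (Nat.card P : ℤ) - 2 := by
  have hα_card := card_eq_two_mul_orbitCount_singleton hα.1 hα.2
  have hβ_card := card_eq_two_mul_orbitCount_singleton hβ.1 hβ.2
  have h' : orbitSetoid {β, α} = ⊤ := Set.pair_comm α β ▸ h
  have hαβ_count := orbitCount_eq_one_of_eq_top h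
  have hβα_count := orbitCount_eq_one_of_eq_top h'
  rw [pdual_twoLayered, eulerGenus_twoLayered fun s ↦ by split_ifs <;> assumption]
  by_cases hfalse : false ∈ T <;> by_cases htrue : true ∈ T <;>
    simp only [hfalse, htrue, if_true, if_false, Set.pair_eq_singleton, iff_true, iff_false,
      not_true_eq_false] <;>
    omega

theorem partialDualGenera_twoLayered_const (hα : α.Involutive ∧ ∀ p, α p ≠ p)
    (hβ : β.Involutive ∧ ∀ p, β p ≠ p) (h : orbitSetoid {α, β} = ⊤) :
    (twoLayered (fun _ ↦ α) (fun _ ↦ β)).partialDualGenera =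
      {0, ((Nat.card P : ℤ) - 2) / 2} := by
  ext g
  rw [mem_partialDualGenera_twoLayered fun _ ↦ h]
  simp only [eulerGenus_pdual_twoLayered_const hα hβ h, Set.mem_insert_iff, Set.mem_singleton_iff]
  constructor
  · rintro ⟨T, rfl⟩
    split_ifs <;> simp
  · rintro (rfl | rfl)
    · exact ⟨∅, by simp⟩
    · exact ⟨{true}, by simp⟩

end ConstantLayers

section Dihedral

open DihedralGroup

variable {n : ℕ}

theorem sr_mul_involutive_and_ne (i : ZMod n) :
    Function.Involutive (sr i * ·) ∧ ∀ p, sr i * p ≠ p :=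
  ⟨fun p ↦ by simp [← mul_assoc], fun p h ↦ nomatch mul_eq_right.1 h⟩

theorem orbitSetoid_sr_mul_eq_top [NeZero n] :
    orbitSetoid {((sr 0 : DihedralGroup n) * ·), (sr 1 * ·)} = ⊤ := by
  set t := orbitSetoid {((sr 0 : DihedralGroup n) * ·), (sr 1 * ·)}
  have hsr_zero (p) : t p (sr 0 * p) := orbitSetoid_apply_of_mem (f := (sr 0 * ·)) (by simp) p
  have hsr_one (p) : t p (sr 1 * p) := orbitSetoid_apply_of_mem (f := (sr 1 * ·)) (by simp) p
  have hrotation (k : ℕ) : t (r 0) (r k) := by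
    induction k with
    | zero => simp
    | succ k ih =>
      have hstep : t (r k) (r (k + 1)) := by
        have h := t.trans' (hsr_one (r k)) (hsr_zero (sr 1 * r k))
        simpa [add_comm] using h
      simpa using t.trans' ih hstep
  have hreach_from_one (p) : t (r 0) p := by
    obtain i | i := p <;> obtain ⟨k, rfl⟩ := ZMod.natCast_zmod_surjective i
    · exact hrotation k
    · simpa using t.trans' (hrotation k) (hsr_zero (r k))
  exact Setoid.eq_top_iff.2 fun p q ↦ t.trans' (t.symm' (hreach_from_one p)) (hreach_from_one q)

/-- The orientation character of the dihedral group. It orients a polygon of flags. -/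
def dihedralSign : DihedralGroup n → ℤ
  | r _ => 1
  | sr _ => -1

theorem dihedralSign_eq_or (p : DihedralGroup n) : dihedralSign p = 1 ∨ dihedralSign p = -1 := by
  cases p <;> simp [dihedralSign]

theorem dihedralSign_sr_mul (i : ZMod n) (p : DihedralGroup n) :
    dihedralSign (sr i * p) = -dihedralSign p := by
  cases p <;> simp [dihedralSign]

end Dihedral

end PreHypermap

open PreHypermap DihedralGroup in
theorem statement_10_general (n : ℕ) :
    ∃ (F : Type) (_ : Fintype F) (H : PreHypermap F),
      H.IsHypermap ∧ H.Connected ∧ H.Orientable ∧ H.partialDualGenera = {0, (n : ℤ)} := by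
  have hgenera := partialDualGenera_twoLayered_const (sr_mul_involutive_and_ne (0 : ZMod (n + 1)))
    (sr_mul_involutive_and_ne 1) orbitSetoid_sr_mul_eq_top
  have hgenus : (((2 * (n + 1) : ℕ) : ℤ) - 2) / 2 = n := by omega
  rw [DihedralGroup.nat_card, hgenus] at hgenera
  exact ⟨Bool × DihedralGroup (n + 1), inferInstance, _,
    twoLayered_isHypermap (fun _ ↦ sr_mul_involutive_and_ne 0)
      (fun _ ↦ sr_mul_involutive_and_ne 1),
    twoLayered_connected fun _ ↦ orbitSetoid_sr_mul_eq_top,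
    twoLayered_orientable dihedralSign_eq_or (fun _ ↦ dihedralSign_sr_mul 0)
      (fun _ ↦ dihedralSign_sr_mul 1),
    hgenera⟩

open PreHypermap in
/-- There is a connected orientable hypermap whose set of partial-dual orientable genera
`{ε(H^A)/2 : A ⊆ E(H)}` contains `0` and `2` but not `1`: the partial-dual genus
polynomial is not always interpolating. -/
theorem statement_10 :
    ∃ (F : Type) (_ : Fintype F) (H : PreHypermap F),
      H.IsHypermap ∧ H.Connected ∧ H.Orientable ∧
      (∃ A ⊆ H.edges, (H.pdual (⋃₀ A)).eulerGenus / 2 = 0) ∧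
      (∃ B ⊆ H.edges, (H.pdual (⋃₀ B)).eulerGenus / 2 = 2) ∧
      (∀ C ⊆ H.edges, (H.pdual (⋃₀ C)).eulerGenus / 2 ≠ 1) := by
  obtain ⟨F, hF, H, hH, hconn, hor, hgenera⟩ := statement_10_general 2
  exact ⟨F, hF, H, hH, hconn, hor, hgenera.ge (.inl rfl), hgenera.ge (.inr rfl),
    fun C hC hone ↦ by simpa using hgenera.le ⟨C, hC, hone⟩⟩
end

section
/- Let H₁ and H₂ be connected combinatorial hypermaps on disjoint flag sets, and let H₁ ∨ H₂ be their join at any chosen corners. Then H₁ ∨ H₂ is connected, χ(H₁ ∨ H₂) = χ(H₁) + χ(H₂) − 2, and ε(H₁ ∨ H₂) = ε(H₁) + ε(H₂). -/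
open Classical

/-!
Compare the orbits of `H₁ ∨ H₂` under a set of the involutions `θᵢ` with those of the disjoint union
of `H₁` and `H₂`. If `θ₁` is not in the set, nothing changes. If `θ₁` and some other `θₖ` are, the
only effect is to merge the orbit of `x` with the orbit of `y`. The point is that cutting the pair
`{x, θ₁ x}` does not disconnect the orbit of `x`: a class closed under `θₖ` has even size, and one
that contained `x` but not `θ₁ x` would be odd, since `θ₁` would pair up all of its flags except
`x`. Hence `v`, `f` and `c` each drop by one, while `e` and the number of flags are additive.
-/

section Setoid

variable {α β : Type*}

/-- The disjoint union of two equivalence relations, encoded as the kernel of the map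
`α ⊕ β → Quotient r ⊕ Quotient s`. -/
def sumSetoid (r : Setoid α) (s : Setoid β) : Setoid (α ⊕ β) :=
  Setoid.ker (Sum.map (Quotient.mk r) (Quotient.mk s))

section Sum

variable {r : Setoid α} {s : Setoid β}

theorem sumSetoid_inl_inl {a a' : α} : sumSetoid r s (.inl a) (.inl a') ↔ r a a' :=
  Sum.inl_injective.eq_iff.trans Quotient.eq

theorem sumSetoid_inr_inr {b b' : β} : sumSetoid r s (.inr b) (.inr b') ↔ s b b' :=
  Sum.inr_injective.eq_iff.trans Quotient.eq

theorem not_sumSetoid_inl_inr {a : α} {b : β} : ¬ sumSetoid r s (.inl a) (.inr b) :=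
  Sum.inl_ne_inr

theorem not_sumSetoid_inr_inl {a : α} {b : β} : ¬ sumSetoid r s (.inr b) (.inl a) :=
  Sum.inr_ne_inl

theorem sumSetoid_le {t : Setoid (α ⊕ β)} (hr : r ≤ t.comap Sum.inl) (hs : s ≤ t.comap Sum.inr) :
    sumSetoid r s ≤ t := by
  rintro (a | b) (a' | b') h
  · exact hr (sumSetoid_inl_inl.1 h)
  · exact (not_sumSetoid_inl_inr h).elim
  · exact (not_sumSetoid_inr_inl h).elim
  · exact hs (sumSetoid_inr_inr.1 h)

theorem card_quotient_sumSetoid [Finite (Quotient r)] [Finite (Quotient s)] :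
    Nat.card (Quotient (sumSetoid r s)) = Nat.card (Quotient r) + Nat.card (Quotient s) := by
  rw [← Nat.card_sum]
  exact Nat.card_congr <| Setoid.quotientKerEquivOfSurjective _ <|
    Quotient.mk_surjective.sumMap Quotient.mk_surjective

end Sum

/-- The equivalence relation obtained from `s` by merging the class of `b` into that of `a`: each
element of the class of `b` is replaced by `a` before comparing. -/
noncomputable def mergeSetoid (s : Setoid α) (a b : α) : Setoid α :=
  s.comap fun z ↦ if s z b then a else z

section Merge

variable {s : Setoid α} {a b : α}

theorem mergeSetoid_apply {z w : α} :
    mergeSetoid s a b z w ↔ s (if s z b then a else z) (if s w b then a else w) :=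
  Iff.rfl

theorem le_mergeSetoid : s ≤ mergeSetoid s a b := by
  intro z w hzw
  have hb : s z b ↔ s w b := ⟨s.trans (s.symm hzw), s.trans hzw⟩
  simp only [mergeSetoid_apply, hb]
  split_ifs
  · exact s.refl a
  · exact hzw

theorem mergeSetoid_rel : mergeSetoid s a b a b := by
  simp only [mergeSetoid_apply, if_pos (s.refl b), ite_self]
  exact s.refl a

theorem mergeSetoid_le {t : Setoid α} (hst : s ≤ t) (hab : t a b) : mergeSetoid s a b ≤ t := by
  have rel_replace (z : α) : t z (if s z b then a else z) := by
    split_ifs with hz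
    · exact t.trans (hst hz) (t.symm hab)
    · exact t.refl z
  intro z w hzw
  exact t.trans (rel_replace z) (t.trans (hst hzw) (t.symm (rel_replace w)))

theorem card_quotient_mergeSetoid_add_one [Finite (Quotient s)] (hab : ¬ s a b) :
    Nat.card (Quotient (mergeSetoid s a b)) + 1 = Nat.card (Quotient s) := by
  have range_eq :
      Set.range (Quotient.mk s ∘ fun z ↦ if s z b then a else z) = {Quotient.mk s b}ᶜ := by
    ext q
    obtain ⟨w, rfl⟩ := Quotient.mk_surjective q
    simp only [Set.mem_range, Function.comp_apply, Quotient.eq, Set.mem_compl_singleton_iff, ne_eq]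
    constructor
    · rintro ⟨z, hz⟩ hw
      split_ifs at hz with hzb
      · exact hab (s.trans hz hw)
      · exact hzb (s.trans hz hw)
    · intro hw
      exact ⟨w, by simp [hw]⟩
  have card_eq : Nat.card (Quotient (mergeSetoid s a b)) = ({Quotient.mk s b}ᶜ : Set _).ncard := by
    rw [← range_eq]
    exact Nat.card_congr (Setoid.comapQuotientEquiv _ s)
  rw [card_eq, ← Set.ncard_singleton (Quotient.mk s b), add_comm, Set.ncard_add_ncard_compl]

end Merge

end Setoid

section Parity

variable {α : Type*}

theorem even_card_of_fixedPointFree_involution (s : Finset α) (g : α → α)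
    (maps : ∀ z ∈ s, g z ∈ s) (invol : ∀ z ∈ s, g (g z) = z) (free : ∀ z ∈ s, g z ≠ z) :
    Even s.card := by
  have sum_eq_zero : ∑ _z ∈ s, (1 : ZMod 2) = 0 :=
    Finset.sum_involution (fun z _ ↦ g z) (fun _ _ ↦ by decide) (fun z hz _ ↦ free z hz) maps invol
  rw [← ZMod.natCast_eq_zero_iff_even]
  simpa using sum_eq_zero

theorem rel_of_rel_off_pair [Finite α] {t : Setoid α} {g h : α → α}
    (g_invol : g.Involutive) (g_free : ∀ z, g z ≠ z)
    (h_invol : h.Involutive) (h_free : ∀ z, h z ≠ z) (rel_h : ∀ z, t z (h z))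
    {x : α} (rel_g : ∀ z, z ≠ x → z ≠ g x → t z (g z)) : t x (g x) := by
  have := Fintype.ofFinite α
  by_contra not_rel
  let C : Finset α := {z | t x z}
  have mem_C {z : α} : z ∈ C ↔ t x z := by simp [C]
  have even_C : Even C.card :=
    even_card_of_fixedPointFree_involution C h
      (fun z hz ↦ mem_C.2 (t.trans (mem_C.1 hz) (rel_h z))) (fun z _ ↦ h_invol z)
      (fun z _ ↦ h_free z)
  have even_erase : Even (C.erase x).card := by
    refine even_card_of_fixedPointFree_involution _ g (fun z hz ↦ ?_) (fun z _ ↦ g_invol z)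
      (fun z _ ↦ g_free z)
    obtain ⟨hzx, hxz⟩ := Finset.mem_erase.1 hz
    rw [mem_C] at hxz
    have hzgx : z ≠ g x := by
      rintro rfl
      exact not_rel hxz
    exact Finset.mem_erase.2
      ⟨fun hgz ↦ hzgx (g_invol.eq_iff.1 hgz), mem_C.2 (t.trans hxz (rel_g z hzx hzgx))⟩
  have card_C : (C.erase x).card + 1 = C.card := Finset.card_erase_add_one (mem_C.2 (t.refl x))
  grind

end Parity

namespace PreHypermap

section Orbits

variable {F : Type*} {H : PreHypermap F} {I : Set (Fin 3)} {t : Setoid F}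

theorem orbitSetoid_theta {i : Fin 3} (hi : i ∈ I) (z : F) :
    orbitSetoid (H.theta '' I) z (H.theta i z) :=
  .rel _ _ ⟨_, Set.mem_image_of_mem _ hi, rfl⟩

theorem orbitSetoid_le (h : ∀ i ∈ I, ∀ z, t z (H.theta i z)) : orbitSetoid (H.theta '' I) ≤ t := by
  refine Setoid.eqvGen_le ?_
  rintro z _ ⟨_, ⟨i, hi, rfl⟩, rfl⟩
  exact h i hi z

theorem IsHypermap.orbitSetoid_le_of_rel_off_corner [Finite F] (hH : H.IsHypermap)
    (hI : I.Nontrivial) {j : Fin 3} {x : F}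
    (rel_of_ne : ∀ i ∈ I, i ≠ j → ∀ z, t z (H.theta i z))
    (rel_off_corner : ∀ z, z ≠ x → z ≠ H.theta j x → t z (H.theta j z)) :
    orbitSetoid (H.theta '' I) ≤ t := by
  obtain ⟨k, hk, hkj⟩ := hI.exists_ne j
  have rel_corner : t x (H.theta j x) :=
    rel_of_rel_off_pair (hH j).1 (hH j).2 (hH k).1 (hH k).2 (rel_of_ne k hk hkj) rel_off_corner
  refine orbitSetoid_le fun i hi z ↦ ?_
  obtain rfl | hij := eq_or_ne i j
  · obtain rfl | hzx := eq_or_ne z x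
    · exact rel_corner
    obtain rfl | hzx' := eq_or_ne z (H.theta i x)
    · rw [(hH i).1 x]
      exact t.symm rel_corner
    · exact rel_off_corner z hzx hzx'
  · exact rel_of_ne i hi hij z

theorem IsHypermap.even_card [Finite F] (hH : H.IsHypermap) : Even (Nat.card F) := by
  have := Fintype.ofFinite F
  rw [Nat.card_eq_fintype_card]
  exact even_card_of_fixedPointFree_involution Finset.univ (H.theta 0)
    (fun _ _ ↦ Finset.mem_univ _) (fun z _ ↦ (hH 0).1 z) (fun z _ ↦ (hH 0).2 z)

end Orbits

section Join

variable {F₁ F₂ : Type*} {H₁ : PreHypermap F₁} {H₂ : PreHypermap F₂} {x : F₁} {y : F₂}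
  {I : Set (Fin 3)}

theorem join_theta_of_ne {i : Fin 3} (hi : i ≠ 1) (z : F₁ ⊕ F₂) :
    (join H₁ H₂ x y).theta i z = Sum.map (H₁.theta i) (H₂.theta i) z := by
  simp [join, hi]

theorem join_theta_one_inl {z : F₁} (hx : z ≠ x) (hx' : z ≠ H₁.theta 1 x) :
    (join H₁ H₂ x y).theta 1 (.inl z) = .inl (H₁.theta 1 z) := by
  simp [join, hx, hx']

theorem join_theta_one_inr {z : F₂} (hy : z ≠ y) (hy' : z ≠ H₂.theta 1 y) :
    (join H₁ H₂ x y).theta 1 (.inr z) = .inr (H₂.theta 1 z) := by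
  simp [join, hy, hy']

theorem join_theta_one_corner : (join H₁ H₂ x y).theta 1 (.inl x) = .inr y := by
  simp [join]

theorem sumSetoid_theta {i : Fin 3} (hi : i ∈ I) (z : F₁ ⊕ F₂) :
    sumSetoid (orbitSetoid (H₁.theta '' I)) (orbitSetoid (H₂.theta '' I)) z
      (Sum.map (H₁.theta i) (H₂.theta i) z) := by
  cases z with
  | inl z => exact sumSetoid_inl_inl.2 (orbitSetoid_theta hi z)
  | inr z => exact sumSetoid_inr_inr.2 (orbitSetoid_theta hi z)

theorem orbitSetoid_join_inl {i : Fin 3} (hi : i ∈ I) (hi' : i ≠ 1) (z : F₁) :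
    orbitSetoid ((join H₁ H₂ x y).theta '' I) (.inl z) (.inl (H₁.theta i z)) := by
  simpa [join_theta_of_ne hi'] using
    orbitSetoid_theta (H := join H₁ H₂ x y) hi (.inl z)

theorem orbitSetoid_join_inr {i : Fin 3} (hi : i ∈ I) (hi' : i ≠ 1) (z : F₂) :
    orbitSetoid ((join H₁ H₂ x y).theta '' I) (.inr z) (.inr (H₂.theta i z)) := by
  simpa [join_theta_of_ne hi'] using
    orbitSetoid_theta (H := join H₁ H₂ x y) hi (.inr z)

theorem orbitSetoid_join_of_notMem (hI : 1 ∉ I) :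
    orbitSetoid ((join H₁ H₂ x y).theta '' I) =
      sumSetoid (orbitSetoid (H₁.theta '' I)) (orbitSetoid (H₂.theta '' I)) := by
  have ne_one {i : Fin 3} (hi : i ∈ I) : i ≠ 1 := ne_of_mem_of_not_mem hi hI
  apply le_antisymm
  · refine orbitSetoid_le fun i hi z ↦ ?_
    rw [join_theta_of_ne (ne_one hi)]
    exact sumSetoid_theta hi z
  · exact sumSetoid_le
      (orbitSetoid_le fun i hi ↦ orbitSetoid_join_inl hi (ne_one hi))
      (orbitSetoid_le fun i hi ↦ orbitSetoid_join_inr hi (ne_one hi))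

theorem orbitSetoid_join_le_mergeSetoid :
    orbitSetoid ((join H₁ H₂ x y).theta '' I) ≤
      mergeSetoid (sumSetoid (orbitSetoid (H₁.theta '' I)) (orbitSetoid (H₂.theta '' I)))
        (.inl x) (.inr y) := by
  set s := sumSetoid (orbitSetoid (H₁.theta '' I)) (orbitSetoid (H₂.theta '' I))
  set m := mergeSetoid s (.inl x) (.inr y)
  have theta_rel {i : Fin 3} (hi : i ∈ I) (z : F₁ ⊕ F₂) :
      m z (Sum.map (H₁.theta i) (H₂.theta i) z) := le_mergeSetoid (sumSetoid_theta hi z)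
  have corner_rel : m (.inl x) (.inr y) := mergeSetoid_rel
  refine orbitSetoid_le fun i hi z ↦ ?_
  obtain rfl | hi' := eq_or_ne i 1
  · have corner_rel' : m (.inl (H₁.theta 1 x)) (.inr (H₂.theta 1 y)) :=
      m.trans (m.symm (theta_rel hi (.inl x))) (m.trans corner_rel (theta_rel hi (.inr y)))
    simp only [join, if_true]
    split_ifs with hx hy hx' hy'
    · exact hx ▸ corner_rel
    · exact hy ▸ m.symm corner_rel
    · exact hx' ▸ corner_rel'
    · exact hy' ▸ m.symm corner_rel'
    · exact theta_rel hi z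
  · rw [join_theta_of_ne hi']
    exact theta_rel hi z

variable [Finite F₁] [Finite F₂]

theorem orbitSetoid_join_of_mem (h₁ : H₁.IsHypermap) (h₂ : H₂.IsHypermap)
    (hI : I.Nontrivial) (one_mem : 1 ∈ I) :
    orbitSetoid ((join H₁ H₂ x y).theta '' I) =
      mergeSetoid (sumSetoid (orbitSetoid (H₁.theta '' I)) (orbitSetoid (H₂.theta '' I)))
        (.inl x) (.inr y) := by
  have theta_one_rel := orbitSetoid_theta (H := join H₁ H₂ x y) one_mem
  refine le_antisymm orbitSetoid_join_le_mergeSetoid (mergeSetoid_le (sumSetoid_le ?_ ?_) ?_)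
  · refine h₁.orbitSetoid_le_of_rel_off_corner hI (x := x)
      (fun i hi hi' ↦ orbitSetoid_join_inl hi hi') fun z hx hx' ↦ ?_
    simpa only [Setoid.comap_rel, join_theta_one_inl hx hx'] using theta_one_rel (.inl z)
  · refine h₂.orbitSetoid_le_of_rel_off_corner hI (x := y)
      (fun i hi hi' ↦ orbitSetoid_join_inr hi hi') fun z hy hy' ↦ ?_
    simpa only [Setoid.comap_rel, join_theta_one_inr hy hy'] using theta_one_rel (.inr z)
  · simpa only [join_theta_one_corner] using theta_one_rel (.inl x)

theorem orbitCount_join_of_notMem (hI : 1 ∉ I) :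
    orbitCount ((join H₁ H₂ x y).theta '' I) =
      orbitCount (H₁.theta '' I) + orbitCount (H₂.theta '' I) := by
  rw [orbitCount, orbitSetoid_join_of_notMem hI]
  exact card_quotient_sumSetoid

theorem orbitCount_join_add_one_of_mem (h₁ : H₁.IsHypermap) (h₂ : H₂.IsHypermap)
    (hI : I.Nontrivial) (one_mem : 1 ∈ I) :
    orbitCount ((join H₁ H₂ x y).theta '' I) + 1 =
      orbitCount (H₁.theta '' I) + orbitCount (H₂.theta '' I) := by
  rw [orbitCount, orbitSetoid_join_of_mem h₁ h₂ hI one_mem,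
    card_quotient_mergeSetoid_add_one not_sumSetoid_inl_inr]
  exact card_quotient_sumSetoid

theorem e_join : (join H₁ H₂ x y).e = H₁.e + H₂.e := by
  simpa only [e, Set.image_pair] using orbitCount_join_of_notMem (I := {0, 2}) (by decide)

theorem v_join_add_one (h₁ : H₁.IsHypermap) (h₂ : H₂.IsHypermap) :
    (join H₁ H₂ x y).v + 1 = H₁.v + H₂.v := by
  simpa only [v, Set.image_pair] using
    orbitCount_join_add_one_of_mem h₁ h₂ (Set.nontrivial_pair (show (1 : Fin 3) ≠ 2 by decide))
      (by simp)

theorem f_join_add_one (h₁ : H₁.IsHypermap) (h₂ : H₂.IsHypermap) :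
    (join H₁ H₂ x y).f + 1 = H₁.f + H₂.f := by
  simpa only [f, Set.image_pair] using
    orbitCount_join_add_one_of_mem h₁ h₂ (Set.nontrivial_pair (show (0 : Fin 3) ≠ 1 by decide))
      (by simp)

theorem c_join_add_one (h₁ : H₁.IsHypermap) (h₂ : H₂.IsHypermap) :
    (join H₁ H₂ x y).c + 1 = H₁.c + H₂.c := by
  simpa only [c, Set.image_insert_eq, Set.image_singleton] using
    orbitCount_join_add_one_of_mem h₁ h₂ (I := {0, 1, 2})
      ⟨0, by simp, 1, by simp, by decide⟩ (by simp)

theorem chi_join (h₁ : H₁.IsHypermap) (h₂ : H₂.IsHypermap) :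
    (join H₁ H₂ x y).chi = H₁.chi + H₂.chi - 2 := by
  have hv := v_join_add_one (x := x) (y := y) h₁ h₂
  have hf := f_join_add_one (x := x) (y := y) h₁ h₂
  have even₁ := h₁.even_card
  have even₂ := h₂.even_card
  rw [chi, chi, chi, Nat.card_sum, e_join]
  grind

theorem eulerGenus_join (h₁ : H₁.IsHypermap) (h₂ : H₂.IsHypermap) :
    (join H₁ H₂ x y).eulerGenus = H₁.eulerGenus + H₂.eulerGenus := by
  have hc := c_join_add_one (x := x) (y := y) h₁ h₂
  rw [eulerGenus, eulerGenus, eulerGenus, chi_join h₁ h₂]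
  omega

end Join

end PreHypermap

open PreHypermap in
theorem statement_11_general {F₁ F₂ : Type*} [Finite F₁] [Finite F₂]
    (H₁ : PreHypermap F₁) (H₂ : PreHypermap F₂)
    (h₁ : H₁.IsHypermap) (h₂ : H₂.IsHypermap) (x : F₁) (y : F₂) :
    (join H₁ H₂ x y).c + 1 = H₁.c + H₂.c ∧
    (join H₁ H₂ x y).chi = H₁.chi + H₂.chi - 2 ∧
    (join H₁ H₂ x y).eulerGenus = H₁.eulerGenus + H₂.eulerGenus :=
  ⟨c_join_add_one h₁ h₂, chi_join h₁ h₂, eulerGenus_join h₁ h₂⟩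

open PreHypermap in
/-- The join of two connected hypermaps (at any chosen corners) is connected,
`χ(H₁ ∨ H₂) = χ(H₁) + χ(H₂) - 2` and `ε(H₁ ∨ H₂) = ε(H₁) + ε(H₂)`. -/
theorem statement_11 {F₁ F₂ : Type} [Fintype F₁] [Fintype F₂]
    (H₁ : PreHypermap F₁) (H₂ : PreHypermap F₂)
    (h₁ : H₁.IsHypermap) (h₂ : H₂.IsHypermap)
    (hc₁ : H₁.Connected) (hc₂ : H₂.Connected) (x : F₁) (y : F₂) :
    (join H₁ H₂ x y).Connected ∧
    (join H₁ H₂ x y).chi = H₁.chi + H₂.chi - 2 ∧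
    (join H₁ H₂ x y).eulerGenus = H₁.eulerGenus + H₂.eulerGenus := by
  obtain ⟨hc, hχε⟩ := statement_11_general H₁ H₂ h₁ h₂ x y
  exact ⟨by rw [Connected] at *; omega, hχε⟩
end
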